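/- arXiv:2602.10033 — 12 statements merged into one kernel-verified Lean document; each statement's English description precedes it below -/
import Mathlib

section
/- Let c : ℕ → ℝ be a sequence. Suppose m ≥ 1 is not a geometric time of c, and let n < m be the largest geometric time of c smaller than m (with n = 0 if no geometric time smaller than m exists). Then ∑_{i=n}^{m−1} c_i < m − n. -/
/-- An integer `n ≥ 1` is a *geometric time* of the sequence `c : ℕ → ℝ` if
for every `k` with `0 ≤ k ≤ n-1` one has `∑_{i=k}^{n-1} c i ≥ n - k`. -/
def IsGeometricTime (c : ℕ → ℝ) (n : ℕ) : Prop :=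
  1 ≤ n ∧ ∀ k : ℕ, k < n → ((n : ℝ) - (k : ℝ)) ≤ ∑ i ∈ Finset.Ico k n, c i

/-!
If `∑_{i=n}^{m-1} c i ≥ m - n`, then the partial sums of `c - 1` are at least as large at `m` as at
`n`, where they attain their running maximum. Their largest value on `(n, m]` is then a running
maximum too, so it occurs at a geometric time in `(n, m]`, and there is none.
-/

/-- The Birkhoff sum of `c - 1` up to time `n`; the geometric times of `c` are the positive times
at which it attains its running maximum. -/
def cumulativeExcess {R : Type*} [AddCommGroupWithOne R] (c : ℕ → R) (n : ℕ) : R :=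
  ∑ i ∈ Finset.range n, (c i - 1)

theorem cumulativeExcess_sub_cumulativeExcess {R : Type*} [AddCommGroupWithOne R] (c : ℕ → R)
    {k n : ℕ} (hkn : k ≤ n) :
    cumulativeExcess c n - cumulativeExcess c k = ∑ i ∈ Finset.Ico k n, c i - ((n : R) - k) := by
  calc cumulativeExcess c n - cumulativeExcess c k
      = ∑ i ∈ Finset.Ico k n, (c i - 1) := (Finset.sum_Ico_eq_sub _ hkn).symm
    _ = ∑ i ∈ Finset.Ico k n, c i - ((n : R) - k) := by
      rw [Finset.sum_sub_distrib, Finset.sum_const, Nat.card_Ico, nsmul_one, Nat.cast_sub hkn]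

theorem sub_le_sum_Ico_iff_cumulativeExcess_le {R : Type*} [AddCommGroupWithOne R]
    [PartialOrder R] [IsOrderedAddMonoid R] (c : ℕ → R) {k n : ℕ} (hkn : k ≤ n) :
    (n : R) - k ≤ ∑ i ∈ Finset.Ico k n, c i ↔ cumulativeExcess c k ≤ cumulativeExcess c n := by
  rw [← sub_nonneg, ← cumulativeExcess_sub_cumulativeExcess c hkn, sub_nonneg]

theorem isGeometricTime_iff_isMaxOn_cumulativeExcess (c : ℕ → ℝ) (n : ℕ) :
    IsGeometricTime c n ↔ 1 ≤ n ∧ IsMaxOn (cumulativeExcess c) (Set.Iic n) n := by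
  simp only [IsGeometricTime, isMaxOn_iff, Set.mem_Iic]
  refine and_congr_right fun _ => ⟨fun h k hk => ?_, fun h k hk => ?_⟩
  · rcases hk.eq_or_lt with rfl | hlt
    · exact le_rfl
    · exact (sub_le_sum_Ico_iff_cumulativeExcess_le c hlt.le).mp (h k hlt)
  · exact (sub_le_sum_Ico_iff_cumulativeExcess_le c hk.le).mpr (h k hk.le)

theorem exists_mem_Ioc_isMaxOn_Iic {ι α : Type*} [LinearOrder ι] [LocallyFiniteOrder ι]
    [LinearOrder α] {f : ι → α} {a b : ι} (hab : a < b) (ha : IsMaxOn f (Set.Iic a) a)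
    (hf : f a ≤ f b) : ∃ k ∈ Set.Ioc a b, IsMaxOn f (Set.Iic k) k := by
  obtain ⟨k, hk, hmax⟩ := (Finset.Ioc a b).exists_max_image f ⟨b, Finset.right_mem_Ioc.mpr hab⟩
  have hak : f a ≤ f k := hf.trans (hmax b (Finset.right_mem_Ioc.mpr hab))
  rw [Finset.mem_Ioc] at hk
  refine ⟨k, hk, fun j hjk => ?_⟩
  rcases le_or_gt j a with hja | haj
  · exact (ha hja).trans hak
  · exact hmax j (Finset.mem_Ioc.mpr ⟨haj, hjk.trans hk.2⟩)

/-- If `m ≥ 1` is not a geometric time of `c` and `n < m` is the largest geometric time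
smaller than `m` (with `n = 0` if there is no geometric time smaller than `m`), then
`∑_{i=n}^{m-1} c i < m - n`. -/
theorem sum_lt_of_largest_geometric_time (c : ℕ → ℝ) (m n : ℕ)
    (hm : 1 ≤ m) (hnot : ¬ IsGeometricTime c m) (hnm : n < m)
    (hn : (IsGeometricTime c n ∧ ∀ k : ℕ, IsGeometricTime c k → k < m → k ≤ n) ∨
          (n = 0 ∧ ∀ k : ℕ, k < m → ¬ IsGeometricTime c k)) :
    ∑ i ∈ Finset.Ico n m, c i < (m : ℝ) - (n : ℝ) := by
  by_contra! hsum
  have hle : cumulativeExcess c n ≤ cumulativeExcess c m :=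
    (sub_le_sum_Ico_iff_cumulativeExcess_le c hnm.le).mp hsum
  have hmax : IsMaxOn (cumulativeExcess c) (Set.Iic n) n := by
    rcases hn with ⟨hgeom, _⟩ | ⟨rfl, _⟩
    · exact ((isGeometricTime_iff_isMaxOn_cumulativeExcess c n).mp hgeom).2
    · simp [isMaxOn_iff]
  obtain ⟨k, ⟨hnk, hkm⟩, hkmax⟩ := exists_mem_Ioc_isMaxOn_Iic hnm hmax hle
  have hk : IsGeometricTime c k :=
    (isGeometricTime_iff_isMaxOn_cumulativeExcess c k).mpr ⟨Nat.one_le_of_lt hnk, hkmax⟩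
  have hkm' : k < m := hkm.lt_of_ne (by rintro rfl; exact hnot hk)
  rcases hn with ⟨_, hlargest⟩ | ⟨_, hnone⟩
  · exact (hlargest k hk hkm').not_gt hnk
  · exact hnone k hkm' hk
end

section
/- Let c : ℕ → ℝ be a sequence, let E ⊆ ℕ be its set of geometric times, and let L ≥ 1 be an integer. If i is an integer such that both i and i+1 belong to the L-expansion E^L, then there exists an integer l with 1 ≤ l ≤ L such that i + l is a geometric time of c; consequently ∑_{m=i}^{i+l−1} c_m ≥ l. -/
/-- The `L`-expansion `E^L` of a set `E ⊆ ℕ`: the union of all integer intervals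
`[a, b]` with `a, b ∈ E` and `0 ≤ b - a ≤ L`. -/
def LExpansion (E : Set ℕ) (L : ℕ) : Set ℕ :=
  {x : ℕ | ∃ a ∈ E, ∃ b ∈ E, a ≤ b ∧ b ≤ a + L ∧ a ≤ x ∧ x ≤ b}

namespace LExpansion

theorem exists_add_mem_of_succ_mem {E : Set ℕ} {L i : ℕ} (hL : 1 ≤ L)
    (hi1 : i + 1 ∈ LExpansion E L) : ∃ l : ℕ, 1 ≤ l ∧ l ≤ L ∧ i + l ∈ E := by
  obtain ⟨a, ha, b, hb, -, hbL, hai, hib⟩ := hi1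
  obtain rfl | hai := hai.eq_or_lt
  · exact ⟨1, le_rfl, hL, ha⟩
  · obtain ⟨l, rfl⟩ := Nat.exists_eq_add_of_le (Nat.le_of_succ_le hib)
    exact ⟨l, by lia, by lia, hb⟩

end LExpansion

namespace IsGeometricTime

theorem le_sum_Ico_add {c : ℕ → ℝ} {i l : ℕ} (h : IsGeometricTime c (i + l)) :
    (l : ℝ) ≤ ∑ m ∈ Finset.Ico i (i + l), c m := by
  obtain rfl | hl := l.eq_zero_or_pos
  · simp
  · simpa using h.2 i (Nat.lt_add_of_pos_right hl)

end IsGeometricTime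

theorem exists_geometric_time_of_mem_LExpansion_general {c : ℕ → ℝ} {L i : ℕ} (hL : 1 ≤ L)
    (hi1 : i + 1 ∈ LExpansion {n : ℕ | IsGeometricTime c n} L) :
    ∃ l : ℕ, 1 ≤ l ∧ l ≤ L ∧ IsGeometricTime c (i + l) ∧
      (l : ℝ) ≤ ∑ m ∈ Finset.Ico i (i + l), c m := by
  obtain ⟨l, hl, hlL, hgeom⟩ := LExpansion.exists_add_mem_of_succ_mem hL hi1
  exact ⟨l, hl, hlL, hgeom, hgeom.le_sum_Ico_add⟩

/-- If `i` and `i+1` both belong to the `L`-expansion of the set of geometric times of `c`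
(`L ≥ 1`), then there is `l` with `1 ≤ l ≤ L` such that `i + l` is a geometric time of `c`,
and consequently `∑_{m=i}^{i+l-1} c m ≥ l`. -/
theorem exists_geometric_time_of_mem_LExpansion (c : ℕ → ℝ) (L : ℕ) (hL : 1 ≤ L)
    (i : ℕ)
    (hi : i ∈ LExpansion {n : ℕ | IsGeometricTime c n} L)
    (hi1 : i + 1 ∈ LExpansion {n : ℕ | IsGeometricTime c n} L) :
    ∃ l : ℕ, 1 ≤ l ∧ l ≤ L ∧ IsGeometricTime c (i + l) ∧
      (l : ℝ) ≤ ∑ m ∈ Finset.Ico i (i + l), c m :=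
  exists_geometric_time_of_mem_LExpansion_general hL hi1
end

section
/- Let c : ℕ → ℝ be a sequence. Suppose that for every n ∈ ℕ there exists an integer l ≥ 1 such that ∑_{m=n}^{n+l−1} c_m ≥ l. Then limsup_{n→∞} (1/n) ∑_{m=0}^{n−1} c_m ≥ 1. -/
/-!
Call `n` good if `n ≤ ∑_{m < n} c m`. The index `0` is good, and appending to `[0, n)` the block
provided by the hypothesis at `n` turns a good `n` into a larger good index. So there are
infinitely many good indices, and at each positive one the average is at least `1`.
-/

open Filter Finset

theorem frequently_atTop_of_forall_exists_gt {α : Type*} [LinearOrder α] [LocallyFiniteOrder α]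
    {p : α → Prop} (hne : ∃ a, p a) (hgt : ∀ a, p a → ∃ b > a, p b) :
    ∃ᶠ a in atTop, p a := by
  obtain ⟨a₀, ha₀⟩ := hne
  have : Nonempty α := ⟨a₀⟩
  refine frequently_atTop.2 fun b ↦ ?_
  by_contra! hb
  have lt_of_p {a : α} (ha : p a) : a < b := lt_of_not_ge fun hba ↦ hb a hba ha
  obtain ⟨a, ⟨ha_mem, ha⟩, ha_max⟩ :=
    ((Set.finite_Icc a₀ b).inter_of_left {a | p a}).exists_maximal
      ⟨a₀, ⟨le_rfl, (lt_of_p ha₀).le⟩, ha₀⟩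
  obtain ⟨a', haa', ha'⟩ := hgt a ha
  exact haa'.not_ge <|
    ha_max ⟨⟨ha_mem.1.trans haa'.le, (lt_of_p ha').le⟩, ha'⟩ haa'.le

theorem nsmul_le_sum_range_add {M : Type*} [AddCommMonoid M] [Preorder M] [IsOrderedAddMonoid M]
    {c : ℕ → M} {x : M} {n l : ℕ} (hn : n • x ≤ ∑ m ∈ range n, c m)
    (hl : l • x ≤ ∑ m ∈ Ico n (n + l), c m) :
    (n + l) • x ≤ ∑ m ∈ range (n + l), c m := by
  rw [add_nsmul, ← sum_range_add_sum_Ico c (Nat.le_add_right n l)]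
  exact add_le_add hn hl

theorem frequently_nsmul_le_sum_range {M : Type*} [AddCommMonoid M] [Preorder M]
    [IsOrderedAddMonoid M] {c : ℕ → M} {x : M}
    (h : ∀ n, ∃ l, 1 ≤ l ∧ l • x ≤ ∑ m ∈ Ico n (n + l), c m) :
    ∃ᶠ n in atTop, n • x ≤ ∑ m ∈ range n, c m := by
  refine frequently_atTop_of_forall_exists_gt ⟨0, by simp⟩ fun n hn ↦ ?_
  obtain ⟨l, hl_pos, hl⟩ := h n
  exact ⟨n + l, Nat.lt_add_of_pos_right hl_pos, nsmul_le_sum_range_add hn hl⟩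

theorem le_limsup_one_div_mul_of_frequently_nsmul_le {s : ℕ → ℝ} {x : ℝ}
    (h : ∃ᶠ n in atTop, n • x ≤ s n) :
    (x : EReal) ≤ limsup (fun n : ℕ ↦ ((1 / (n : ℝ) * s n : ℝ) : EReal)) atTop := by
  refine le_limsup_of_frequently_le' <|
    (h.and_eventually (eventually_gt_atTop 0)).mono fun n ⟨hn, hn_pos⟩ ↦ ?_
  rw [EReal.coe_le_coe_iff, one_div_mul_eq_div, le_div_iff₀' (Nat.cast_pos.2 hn_pos)]
  rwa [nsmul_eq_mul] at hn

/-- If for every `n` there is `l ≥ 1` with `∑_{m=n}^{n+l-1} c m ≥ l`, then the upper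
Birkhoff average `limsup_{n→∞} (1/n) ∑_{m=0}^{n-1} c m` is at least `1`
(the limsup being taken in the extended reals). -/
theorem one_le_limsup_average (c : ℕ → ℝ)
    (h : ∀ n : ℕ, ∃ l : ℕ, 1 ≤ l ∧ (l : ℝ) ≤ ∑ m ∈ Finset.Ico n (n + l), c m) :
    (1 : EReal) ≤
      Filter.limsup (fun n : ℕ =>
        (((1 / (n : ℝ)) * ∑ m ∈ Finset.range n, c m : ℝ) : EReal)) Filter.atTop := by
  have frequently_good : ∃ᶠ n in atTop, n • (1 : ℝ) ≤ ∑ m ∈ range n, c m :=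
    frequently_nsmul_le_sum_range <| by simpa only [nsmul_one] using h
  exact_mod_cast le_limsup_one_div_mul_of_frequently_nsmul_le frequently_good
end

section
/- Let X be a compact metric space and f : X → X a continuous map. Fix L ≥ 1. For each n ≥ 1, let x_n ∈ X and let E_n ⊆ {0,1,…,n−1} be a finite union of at most n/L + 2 pairwise disjoint integer intervals, and set ν_n := (1/n) ∑_{i∈E_n} δ_{f^i(x_n)} (a finite Borel measure on X of total mass at most 1). Then: (i) for every continuous h : X → ℝ and every n, |∫ h dν_n − ∫ (h∘f) dν_n| ≤ ((n/L + 2)·2/n)·sup_{x∈X}|h(x)|; (ii) consequently, if ν_n converges weakly to a finite Borel measure ν^L as n → ∞, then |∫ h dν^L − ∫ (h∘f) dν^L| ≤ (2/L)·sup_{x∈X}|h(x)| for every continuous h; and (iii) if moreover ν^L converges weakly to a finite Borel measure ν as L → ∞, then ν is f-invariant, i.e. ∫ h dν = ∫ (h∘f) dν for every continuous h : X → ℝ. -/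
open MeasureTheory Filter

open scoped symmDiff BoundedContinuousFunction Topology

/-!
Let `s + 1` denote the translate of `s ⊆ ℕ`. Replacing `h` by `h ∘ f` in `∑_{i ∈ s} h (fⁱ x)`
amounts to summing over `s + 1` instead of `s`, so it only affects the terms with index in
`s ∆ (s + 1)`. For a union of `k` intervals this set consists of endpoints of the intervals, hence
has at most `2k` elements; with `k ≤ n / L + 2` the relative error `2k / n` is at most
`2 / L + 4 / n`, which vanishes as first `n → ∞` and then `L → ∞`.
-/

theorem norm_sum_sub_sum_le_card_symmDiff_mul {ι G : Type*} [DecidableEq ι]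
    [SeminormedAddCommGroup G] (s t : Finset ι) {g : ι → G} {M : ℝ} (hg : ∀ i, ‖g i‖ ≤ M) :
    ‖∑ i ∈ s, g i - ∑ i ∈ t, g i‖ ≤ (s ∆ t).card * M := by
  have card_bound (u : Finset ι) : ‖∑ i ∈ u, g i‖ ≤ u.card * M := by
    simpa only [nsmul_eq_mul, Finset.sum_const] using norm_sum_le_of_le u fun i _ ↦ hg i
  calc
    ‖∑ i ∈ s, g i - ∑ i ∈ t, g i‖ = ‖∑ i ∈ s \ t, g i - ∑ i ∈ t \ s, g i‖ := by
      rw [Finset.sum_sdiff_sub_sum_sdiff]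
    _ ≤ ‖∑ i ∈ s \ t, g i‖ + ‖∑ i ∈ t \ s, g i‖ := norm_sub_le _ _
    _ ≤ (s \ t).card * M + (t \ s).card * M := add_le_add (card_bound _) (card_bound _)
    _ = (s ∆ t).card * M := by
      rw [symmDiff_def, Finset.sup_eq_union, Finset.card_union_of_disjoint disjoint_sdiff_sdiff]
      push_cast
      ring

/-- `s` is the union of `k` integer intervals `[a j, b j)`. The intervals may overlap or be empty,
so that `k` is only an upper bound for the number of maximal intervals in `s`. -/
def IsUnionOfIntervals (s : Finset ℕ) (k : ℕ) : Prop :=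
  ∃ a b : Fin k → ℕ, (s : Set ℕ) = ⋃ j, Set.Ico (a j) (b j)

theorem IsUnionOfIntervals.card_symmDiff_image_succ_le {s : Finset ℕ} {k : ℕ}
    (hs : IsUnionOfIntervals s k) : (s ∆ s.image Nat.succ).card ≤ 2 * k := by
  obtain ⟨a, b, hab⟩ := hs
  have mem_s (i : ℕ) : i ∈ s ↔ ∃ j, a j ≤ i ∧ i < b j := by
    simpa only [Finset.mem_coe, Set.mem_iUnion, Set.mem_Ico] using Set.ext_iff.1 hab i
  have endpoints : s ∆ s.image Nat.succ ⊆ Finset.univ.image a ∪ Finset.univ.image b := by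
    intro i hi
    simp only [Finset.mem_union, Finset.mem_image, Finset.mem_univ, true_and]
    rcases Finset.mem_symmDiff.1 hi with ⟨hi, hi_succ⟩ | ⟨hi_succ, hi⟩
    · obtain ⟨j, haj, hbj⟩ := (mem_s i).1 hi
      refine .inl ⟨j, haj.antisymm (not_lt.1 fun hlt ↦ hi_succ ?_)⟩
      exact Finset.mem_image.2 ⟨i - 1, (mem_s _).2 ⟨j, by lia, by lia⟩, by lia⟩
    · obtain ⟨i, hi', rfl⟩ := Finset.mem_image.1 hi_succ
      obtain ⟨j, haj, hbj⟩ := (mem_s i).1 hi'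
      refine .inr ⟨j, le_antisymm (not_lt.1 fun hlt ↦ hi ?_) hbj⟩
      exact (mem_s _).2 ⟨j, by lia, hlt⟩
  calc
    (s ∆ s.image Nat.succ).card ≤ (Finset.univ.image a ∪ Finset.univ.image b).card :=
      Finset.card_le_card endpoints
    _ ≤ (Finset.univ.image a).card + (Finset.univ.image b).card := Finset.card_union_le _ _
    _ ≤ k + k := by
      gcongr <;> exact Finset.card_image_le.trans_eq (Finset.card_fin k)
    _ = 2 * k := (two_mul k).symm

section EmpiricalMeasure

variable {X G : Type*} [MeasurableSpace X] [NormedAddCommGroup G] [NormedSpace ℝ G]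
  [CompleteSpace G]

/-- The measure `(1/n) ∑_{i ∈ s} δ_{fⁱ x}` carried by the piece of the orbit of `x` with times
in `s`. The normalisation `n` is the length of the ambient orbit segment, not the number of
elements of `s`; for `n = 0` the factor `1/n` is `∞` and every integral is `0`
by convention. -/
noncomputable def empiricalMeasure (f : X → X) (x : X) (s : Finset ℕ) (n : ℕ) : Measure X :=
  (n : ENNReal)⁻¹ • ∑ i ∈ s, Measure.dirac (f^[i] x)

theorem integral_empiricalMeasure (f : X → X) (x : X) (s : Finset ℕ) (n : ℕ) {h : X → G}
    (hh : StronglyMeasurable h) :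
    ∫ y, h y ∂empiricalMeasure f x s n = (n : ℝ)⁻¹ • ∑ i ∈ s, h (f^[i] x) := by
  rw [empiricalMeasure, integral_smul_measure,
    integral_finsetSum_measure fun i _ ↦ integrable_dirac' hh enorm_lt_top]
  simp only [integral_dirac' _ _ hh, ENNReal.toReal_inv, ENNReal.toReal_natCast]

theorem norm_integral_sub_integral_comp_empiricalMeasure_le {f : X → X} (x : X)
    {s : Finset ℕ} {k : ℕ} (hs : IsUnionOfIntervals s k) (n : ℕ) {h : X → G}
    (hh : StronglyMeasurable h) (hhf : StronglyMeasurable fun y ↦ h (f y)) {M : ℝ}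
    (hM : ∀ y, ‖h y‖ ≤ M) :
    ‖∫ y, h y ∂empiricalMeasure f x s n - ∫ y, h (f y) ∂empiricalMeasure f x s n‖ ≤
      k * 2 / n * M := by
  have shift : ∑ i ∈ s, h (f (f^[i] x)) = ∑ i ∈ s.image Nat.succ, h (f^[i] x) := by
    simp only [Finset.sum_image Nat.succ_injective.injOn, Function.iterate_succ_apply']
  have M_nonneg : 0 ≤ M := (norm_nonneg _).trans (hM x)
  rw [integral_empiricalMeasure f x s n hh, integral_empiricalMeasure f x s n hhf, shift,
    ← smul_sub, norm_smul, Real.norm_of_nonneg (by positivity)]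
  calc
    (n : ℝ)⁻¹ * ‖∑ i ∈ s, h (f^[i] x) - ∑ i ∈ s.image Nat.succ, h (f^[i] x)‖
      ≤ (n : ℝ)⁻¹ * ((s ∆ s.image Nat.succ).card * M) := by
        gcongr
        exact norm_sum_sub_sum_le_card_symmDiff_mul _ _ fun i ↦ hM _
    _ ≤ (n : ℝ)⁻¹ * ((2 * k : ℕ) * M) := by
        gcongr
        exact hs.card_symmDiff_image_succ_le
    _ = k * 2 / n * M := by
        push_cast
        ring

end EmpiricalMeasure

theorem abs_integral_sub_integral_comp_le_of_tendsto {X ι : Type*} [TopologicalSpace X]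
    [MeasurableSpace X] {l : Filter ι} [l.NeBot] {ν : ι → Measure X} {μ : Measure X}
    (hν : ∀ h : X →ᵇ ℝ, Tendsto (fun i ↦ ∫ y, h y ∂ν i) l (𝓝 (∫ y, h y ∂μ)))
    {f : X → X} (hf : Continuous f) (h : X →ᵇ ℝ) {c : ι → ℝ} {C : ℝ} (hc : Tendsto c l (𝓝 C))
    (hle : ∀ᶠ i in l, |∫ y, h y ∂ν i - ∫ y, h (f y) ∂ν i| ≤ c i) :
    |∫ y, h y ∂μ - ∫ y, h (f y) ∂μ| ≤ C :=
  le_of_tendsto_of_tendsto ((hν h).sub (hν (h.compContinuous ⟨f, hf⟩))).abs hc hle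

theorem tendsto_div_add_two_mul_two_div (L : ℝ) :
    Tendsto (fun n : ℕ ↦ ((n : ℝ) / L + 2) * 2 / (n : ℝ)) atTop (𝓝 (2 / L)) := by
  have expanded : Tendsto (fun n : ℕ ↦ 2 / L + 4 / (n : ℝ)) atTop (𝓝 (2 / L)) := by
    simpa only [add_zero] using
      tendsto_const_nhds.add (tendsto_const_div_atTop_nhds_zero_nat (4 : ℝ))
  refine expanded.congr' ((eventually_ne_atTop 0).mono fun n hn ↦ ?_)
  field_simp
  ring

theorem empirical_measures_along_intervals_invariant_general
    {X : Type*} [TopologicalSpace X] [MeasurableSpace X] [OpensMeasurableSpace X]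
    {f : X → X} (hf : Continuous f) (x : ℕ → X) {E : ℕ → ℕ → Finset ℕ}
    (hE : ∀ L n : ℕ, 1 ≤ L → 1 ≤ n →
      ∃ k : ℕ, (k : ℝ) ≤ (n : ℝ) / (L : ℝ) + 2 ∧ IsUnionOfIntervals (E L n) k) :
    (∀ (h : X →ᵇ ℝ) (L n : ℕ), 1 ≤ L → 1 ≤ n →
      |∫ y, h y ∂empiricalMeasure f (x n) (E L n) n -
          ∫ y, h (f y) ∂empiricalMeasure f (x n) (E L n) n| ≤
        ((n : ℝ) / (L : ℝ) + 2) * 2 / (n : ℝ) * ‖h‖) ∧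
    ∀ νL : ℕ → FiniteMeasure X,
      (∀ L : ℕ, 1 ≤ L → ∀ h : X →ᵇ ℝ,
        Tendsto (fun n ↦ ∫ y, h y ∂empiricalMeasure f (x n) (E L n) n) atTop
          (𝓝 (∫ y, h y ∂(νL L : Measure X)))) →
      (∀ (h : X →ᵇ ℝ) (L : ℕ), 1 ≤ L →
        |∫ y, h y ∂(νL L : Measure X) - ∫ y, h (f y) ∂(νL L : Measure X)| ≤
          2 / (L : ℝ) * ‖h‖) ∧
      ∀ μ : FiniteMeasure X, Tendsto νL atTop (𝓝 μ) →
        ∀ h : X →ᵇ ℝ, ∫ y, h y ∂(μ : Measure X) = ∫ y, h (f y) ∂(μ : Measure X) := by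
  have empirical_bound (h : X →ᵇ ℝ) (L n : ℕ) (hL : 1 ≤ L) (hn : 1 ≤ n) :
      |∫ y, h y ∂empiricalMeasure f (x n) (E L n) n -
          ∫ y, h (f y) ∂empiricalMeasure f (x n) (E L n) n| ≤
        ((n : ℝ) / (L : ℝ) + 2) * 2 / (n : ℝ) * ‖h‖ := by
    obtain ⟨k, hk, hs⟩ := hE L n hL hn
    refine (norm_integral_sub_integral_comp_empiricalMeasure_le (x n) hs n
      h.continuous.stronglyMeasurable (h.continuous.comp hf).stronglyMeasurable
      h.norm_coe_le_norm).trans ?_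
    gcongr
  refine ⟨empirical_bound, fun νL hνL ↦ ?_⟩
  have limit_bound (h : X →ᵇ ℝ) (L : ℕ) (hL : 1 ≤ L) :
      |∫ y, h y ∂(νL L : Measure X) - ∫ y, h (f y) ∂(νL L : Measure X)| ≤ 2 / (L : ℝ) * ‖h‖ :=
    abs_integral_sub_integral_comp_le_of_tendsto (hνL L hL) hf h
      ((tendsto_div_add_two_mul_two_div L).mul_const ‖h‖)
      ((eventually_ge_atTop 1).mono fun n hn ↦ empirical_bound h L n hL hn)
  refine ⟨limit_bound, fun μ hμ h ↦ sub_eq_zero.1 (abs_nonpos_iff.1 ?_)⟩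
  have bound_tendsto_zero : Tendsto (fun L : ℕ ↦ 2 / (L : ℝ) * ‖h‖) atTop (𝓝 0) := by
    simpa only [zero_mul] using (tendsto_const_div_atTop_nhds_zero_nat 2).mul_const ‖h‖
  exact abs_integral_sub_integral_comp_le_of_tendsto
    (FiniteMeasure.tendsto_iff_forall_integral_tendsto.1 hμ) hf h bound_tendsto_zero
    ((eventually_ge_atTop 1).mono fun L hL ↦ limit_bound h L hL)

/-- Empirical measures along subsets of `{0,…,n-1}` consisting of at most `n/L + 2`
pairwise disjoint integer intervals: (i) quantitative almost-invariance for each `n`;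
(ii) almost-invariance of weak limits as `n → ∞`; (iii) invariance of a weak limit
as `L → ∞`. -/
theorem empirical_measures_along_intervals_invariant
    {X : Type*} [MetricSpace X] [CompactSpace X] [MeasurableSpace X] [BorelSpace X]
    (f : X → X) (hf : Continuous f)
    (x : ℕ → X) (E : ℕ → ℕ → Finset ℕ)
    (hErange : ∀ L n : ℕ, 1 ≤ L → 1 ≤ n → E L n ⊆ Finset.range n)
    (hEint : ∀ L n : ℕ, 1 ≤ L → 1 ≤ n → ∃ (k : ℕ) (a b : Fin k → ℕ),
        (k : ℝ) ≤ (n : ℝ) / (L : ℝ) + 2 ∧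
        ((E L n : Finset ℕ) : Set ℕ) = ⋃ j : Fin k, Set.Ico (a j) (b j) ∧
        Pairwise fun j j' : Fin k =>
          Disjoint (Set.Ico (a j) (b j)) (Set.Ico (a j') (b j')))
    (ν : ℕ → ℕ → Measure X)
    (hν : ∀ L n : ℕ, ν L n =
      ((n : ENNReal))⁻¹ • ∑ i ∈ E L n, Measure.dirac (f^[i] (x n))) :
    -- (i)
    (∀ (h : C(X, ℝ)) (L n : ℕ), 1 ≤ L → 1 ≤ n →
        |(∫ y, h y ∂(ν L n)) - ∫ y, h (f y) ∂(ν L n)| ≤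
          (((n : ℝ) / (L : ℝ) + 2) * 2 / (n : ℝ)) * ⨆ y : X, |h y|) ∧
    -- (ii) and (iii)
    (∀ (νL : ℕ → Measure X), (∀ L : ℕ, IsFiniteMeasure (νL L)) →
      (∀ L : ℕ, 1 ≤ L → ∀ h : C(X, ℝ),
          Tendsto (fun n : ℕ => ∫ y, h y ∂(ν L n)) atTop (nhds (∫ y, h y ∂(νL L)))) →
      ((∀ (h : C(X, ℝ)) (L : ℕ), 1 ≤ L →
          |(∫ y, h y ∂(νL L)) - ∫ y, h (f y) ∂(νL L)| ≤ (2 / (L : ℝ)) * ⨆ y : X, |h y|) ∧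
        (∀ μ : Measure X, IsFiniteMeasure μ →
          (∀ h : C(X, ℝ),
            Tendsto (fun L : ℕ => ∫ y, h y ∂(νL L)) atTop (nhds (∫ y, h y ∂μ))) →
          ∀ h : C(X, ℝ), (∫ y, h y ∂μ) = ∫ y, h (f y) ∂μ))) := by
  obtain rfl : ν = fun L n ↦ empiricalMeasure f (x n) (E L n) n := funext₂ hν
  have norm_eq (h : C(X, ℝ)) : ‖BoundedContinuousFunction.mkOfCompact h‖ = ⨆ y, |h y| :=
    BoundedContinuousFunction.norm_eq_iSup_norm _
  obtain ⟨empirical_bound, limits⟩ :=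
    empirical_measures_along_intervals_invariant_general hf x fun L n hL hn ↦
      let ⟨k, a, b, hk, hab, _⟩ := hEint L n hL hn
      ⟨k, hk, a, b, hab⟩
  refine ⟨fun h ↦ norm_eq h ▸ empirical_bound (.mkOfCompact h), fun νL hfin hνL ↦ ?_⟩
  obtain ⟨limit_bound, invariant⟩ :=
    limits (fun L ↦ ⟨νL L, hfin L⟩) fun L hL h ↦ hνL L hL h.toContinuousMap
  exact ⟨fun h ↦ norm_eq h ▸ limit_bound (.mkOfCompact h), fun μ hμfin hμ h ↦
    invariant ⟨μ, hμfin⟩ (FiniteMeasure.tendsto_iff_forall_integral_tendsto.2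
      fun g ↦ hμ g.toContinuousMap) (.mkOfCompact h)⟩
end

section
/- Let X be a compact topological space, let μ be a finite Borel measure on X that is positive on every nonempty open set, and let (g_n)_{n≥1} be a sequence of continuous strictly positive functions g_n : X → ℝ. For a Borel set S ⊆ X define λ(S) := limsup_{n→∞} (1/n) log ∫_S g_n dμ (a value in [−∞, +∞]). Then there exists a point z ∈ X such that for every open neighborhood U of z, λ(U) = λ(X). -/
open MeasureTheory Filter

/-!
The growth rate `λ(S) = limsup (1/n) log ∫_S g_n dμ` is monotone and satisfies
`λ(S ∪ T) ≤ max (λ(S)) (λ(T))`, because the exponential growth rate of a sum of two nonnegative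
sequences is the larger of their growth rates. If every point had a neighborhood `U` with
`λ(U) < λ(X)`, then finitely many such neighborhoods would cover `X`, and `λ(X)` would be at most
the largest of their growth rates, hence smaller than itself.
-/

open scoped ENNReal Topology

theorem exists_forall_mem_nhdsWithin_le_of_isCompact {X α : Type*} [TopologicalSpace X]
    [LinearOrder α] {K : Set X} (hK : IsCompact K) (hne : K.Nonempty) {Λ : Set X → α}
    (hmono : Monotone Λ) (hunion : ∀ S T, Λ (S ∪ T) ≤ Λ S ⊔ Λ T) :
    ∃ z ∈ K, ∀ U ∈ 𝓝[K] z, Λ K ≤ Λ U := by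
  by_contra! hsmall
  obtain ⟨x, hx⟩ := hne
  obtain ⟨V, -, hV⟩ := hsmall x hx
  exact lt_irrefl (Λ K) <| hK.induction_on (p := fun S => Λ S < Λ K)
    ((hmono V.empty_subset).trans_lt hV)
    (fun _ _ hST hT => (hmono hST).trans_lt hT)
    (fun S T hS hT => (hunion S T).trans_lt (max_lt hS hT))
    hsmall

section LintegralGrowthRate

variable {X : Type*} [MeasurableSpace X]

/-- The exponential growth rate `λ(S) = limsup (1/n) log ∫_S f_n dμ` of a sequence of functions on a
set, as a function of the set. Using the `[0, ∞]`-valued integral and the `[-∞, ∞]`-valued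
logarithm, instead of their real counterparts, avoids the junk values of the latter. -/
noncomputable def lintegralGrowthRate (μ : Measure X) (f : ℕ → X → ℝ≥0∞) (S : Set X) : EReal :=
  ExpGrowth.expGrowthSup fun n => ∫⁻ x in S, f n x ∂μ

theorem lintegralGrowthRate_mono (μ : Measure X) (f : ℕ → X → ℝ≥0∞) :
    Monotone (lintegralGrowthRate μ f) :=
  fun _ _ hST => ExpGrowth.expGrowthSup_monotone fun _ => lintegral_mono_set hST

theorem lintegralGrowthRate_union_le (μ : Measure X) (f : ℕ → X → ℝ≥0∞) (S T : Set X) :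
    lintegralGrowthRate μ f (S ∪ T) ≤ lintegralGrowthRate μ f S ⊔ lintegralGrowthRate μ f T := by
  unfold lintegralGrowthRate
  rw [← ExpGrowth.expGrowthSup_add]
  exact ExpGrowth.expGrowthSup_monotone fun n => lintegral_union_le (f n) S T

end LintegralGrowthRate

theorem expGrowthSup_ofReal {a : ℕ → ℝ} (ha : ∀ᶠ n in atTop, 0 < a n) :
    ExpGrowth.expGrowthSup (fun n => ENNReal.ofReal (a n)) =
      limsup (fun n : ℕ => ((1 / (n : ℝ) * Real.log (a n) : ℝ) : EReal)) atTop := by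
  refine limsup_congr (ha.mono fun n hn => ?_)
  rw [ENNReal.log_ofReal_of_pos hn, one_div_mul_eq_div, EReal.coe_div, EReal.coe_natCast]

section BochnerIntegral

variable {X : Type*} [MeasurableSpace X] {μ : Measure X}

theorem integral_pos_of_ae_pos [NeZero μ] {f : X → ℝ} (hf : Integrable f μ)
    (hpos : ∀ᵐ x ∂μ, 0 < f x) : 0 < ∫ x, f x ∂μ := by
  have hnonneg : 0 ≤ᵐ[μ] f := hpos.mono fun _ => le_of_lt
  refine (integral_nonneg_of_ae hnonneg).lt_of_ne' fun hzero => ?_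
  obtain ⟨x, hx, hx₀⟩ := (hpos.and ((integral_eq_zero_iff_of_nonneg_ae hnonneg hf).1 hzero)).exists
  exact hx.ne' hx₀

theorem limsup_log_setIntegral_eq_lintegralGrowthRate {g : ℕ → X → ℝ} {S : Set X} (hS : μ S ≠ 0)
    (hint : ∀ᶠ n in atTop, IntegrableOn (g n) S μ)
    (hpos : ∀ᶠ n in atTop, ∀ᵐ x ∂μ.restrict S, 0 < g n x) :
    limsup (fun n : ℕ => ((1 / (n : ℝ) * Real.log (∫ x in S, g n x ∂μ) : ℝ) : EReal)) atTop =
      lintegralGrowthRate μ (fun n x => ENNReal.ofReal (g n x)) S := by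
  have : NeZero (μ.restrict S) := ⟨mt Measure.restrict_eq_zero.1 hS⟩
  rw [← expGrowthSup_ofReal ((hint.and hpos).mono fun n hn => integral_pos_of_ae_pos hn.1 hn.2)]
  refine ExpGrowth.expGrowthSup_congr ((hint.and hpos).mono fun n ⟨hn, hn_pos⟩ => ?_)
  exact ofReal_integral_eq_lintegral_ofReal hn (hn_pos.mono fun _ => le_of_lt)

end BochnerIntegral

theorem exists_maximal_point_general {X : Type*} [TopologicalSpace X] [CompactSpace X] [Nonempty X]
    [MeasurableSpace X] (μ : Measure X) [μ.IsOpenPosMeasure] (g : ℕ → X → ℝ)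
    (hint : ∀ᶠ n in atTop, Integrable (g n) μ) (hpos : ∀ᶠ n in atTop, ∀ᵐ x ∂μ, 0 < g n x) :
    ∃ z : X, ∀ U ∈ 𝓝 z,
      limsup (fun n : ℕ => ((1 / (n : ℝ) * Real.log (∫ x in U, g n x ∂μ) : ℝ) : EReal)) atTop =
        limsup (fun n : ℕ => ((1 / (n : ℝ) * Real.log (∫ x, g n x ∂μ) : ℝ) : EReal)) atTop := by
  let rate := lintegralGrowthRate μ fun n x => ENNReal.ofReal (g n x)
  have limsup_eq_rate {z : X} {U : Set X} (hU : U ∈ 𝓝 z) :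
      limsup (fun n : ℕ => ((1 / (n : ℝ) * Real.log (∫ x in U, g n x ∂μ) : ℝ) : EReal)) atTop =
        rate U :=
    limsup_log_setIntegral_eq_lintegralGrowthRate (Measure.measure_pos_of_mem_nhds μ hU).ne'
      (hint.mono fun _ hn => hn.integrableOn) (hpos.mono fun _ hn => ae_restrict_of_ae hn)
  have rate_mono : Monotone rate := lintegralGrowthRate_mono μ _
  obtain ⟨z, -, hz⟩ := exists_forall_mem_nhdsWithin_le_of_isCompact isCompact_univ Set.univ_nonempty
    rate_mono (lintegralGrowthRate_union_le μ _)
  refine ⟨z, fun U hU => ?_⟩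
  have rate_eq : rate U = rate Set.univ :=
    (rate_mono U.subset_univ).antisymm (hz U (mem_nhdsWithin_of_mem_nhds hU))
  rw [limsup_eq_rate hU, rate_eq, ← limsup_eq_rate (z := z) univ_mem, Measure.restrict_univ]

/-- Existence of a point realizing the maximal local growth rate: if `μ` is a finite
Borel measure on a compact space `X` which is positive on nonempty open sets, and
`g n` are continuous strictly positive functions, then there is a point `z ∈ X` such
that for every open neighborhood `U` of `z`,
`limsup (1/n) log ∫_U g_n dμ = limsup (1/n) log ∫_X g_n dμ` (limsups in `[-∞,+∞]`). -/
theorem exists_maximal_point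
    {X : Type*} [TopologicalSpace X] [CompactSpace X] [Nonempty X]
    [MeasurableSpace X] [BorelSpace X]
    (μ : Measure X) (hfin : IsFiniteMeasure μ)
    (hpos : ∀ U : Set X, IsOpen U → U.Nonempty → 0 < μ U)
    (g : ℕ → X → ℝ) (hgc : ∀ n, Continuous (g n)) (hgpos : ∀ n x, 0 < g n x) :
    ∃ z : X, ∀ U : Set X, IsOpen U → z ∈ U →
      Filter.limsup (fun n : ℕ =>
          (((1 / (n : ℝ)) * Real.log (∫ x in U, g n x ∂μ) : ℝ) : EReal)) Filter.atTop =
        Filter.limsup (fun n : ℕ =>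
          (((1 / (n : ℝ)) * Real.log (∫ x, g n x ∂μ) : ℝ) : EReal)) Filter.atTop := by
  have : μ.IsOpenPosMeasure := ⟨fun U hU hne => (hpos U hU hne).ne'⟩
  obtain ⟨z, hz⟩ := exists_maximal_point_general μ g
    (.of_forall fun n => (hgc n).integrable_of_hasCompactSupport (.of_compactSpace (g n)))
    (.of_forall fun n => ae_of_all μ (hgpos n))
  exact ⟨z, fun U hU hzU => hz U (hU.mem_nhds hzU)⟩
end

section
/- Let E be a real normed vector space, let R ≥ 1 be an integer, let 0 < ε ≤ 1/100, and let σ : ℝ → E be R times continuously differentiable with sup_{t∈[0,1]} ‖σ^{(s)}(t)‖ ≤ 1 for every 1 ≤ s ≤ R and ‖σ′(t)‖ ≥ 1/2 for all t ∈ [0,1]. Set N = ⌈1/ε⌉, δ = 1/N, and define affine maps θ_j : [0,1] → [0,1] by θ_j(t) = δt + b_j where b_j = (j−1)δ for 1 ≤ j < N and b_N = 1 − δ. Then the curves σ_j := σ ∘ θ_j (1 ≤ j ≤ N) satisfy: (i) σ([0,1]) = ⋃_{j=1}^{N} σ_j([0,1]); (ii) sup_{t∈[0,1]} ‖σ_j′(t)‖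 ≤ ε for each j; and (iii) for every 2 ≤ s ≤ R, sup_{t∈[0,1]} ‖σ_j^{(s)}(t)‖ ≤ (1/6) · sup_{t∈[0,1]} ‖σ_j′(t)‖. In particular each σ_j is ε-bounded. -/
/-!
Precomposing `σ` with an affine map of slope `δ` multiplies its `s`-th derivative by `δ ^ s`. The
first derivative thus keeps a lower bound of order `δ` while all higher ones drop to order `δ ^ 2`
or less, so cutting `[0, 1]` into `1 / δ` equal pieces makes every piece bounded once `δ` is small
compared with the ratio of the lower bound to the upper bounds.
-/

open Set

section Cover

theorem iUnion_Icc_sub_one_mul {A : Type*} [Ring A] [LinearOrder A] [IsOrderedRing A]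
    {δ : A} (hδ : 0 ≤ δ) {n : ℕ} (hn : 1 ≤ n) :
    ⋃ j ∈ Finset.Icc 1 n, Icc (((j : A) - 1) * δ) (j * δ) = Icc 0 (n * δ) := by
  induction n, hn using Nat.le_induction with
  | base => simp
  | succ n _ ih =>
    have hle : (n : A) * δ ≤ (n + 1) * δ :=
      mul_le_mul_of_nonneg_right (le_add_of_nonneg_right zero_le_one) hδ
    rw [← Finset.insert_Icc_right_eq_Icc_add_one (by lia), Finset.set_biUnion_insert, ih,
      union_comm, Nat.cast_add_one, add_sub_cancel_right]
    exact Icc_union_Icc_eq_Icc (mul_nonneg n.cast_nonneg hδ) hle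

variable {K : Type*} [Field K] [LinearOrder K] [IsStrictOrderedRing K]

theorem image_mul_add_unitInterval {δ : K} (hδ : 0 < δ) (c : K) :
    (fun t => δ * t + c) '' Icc 0 1 = Icc c (c + δ) := by
  simpa [add_comm] using image_affine_Icc' hδ c 0 1

theorem iUnion_image_mul_add_eq_unitInterval {N : ℕ} (hN : 1 ≤ N) {δ : K} (hδ : δ = 1 / N)
    {b : ℕ → K} (hb : ∀ j, 1 ≤ j → j ≤ N → b j = (j - 1) * δ) :
    ⋃ j ∈ Finset.Icc 1 N, (fun t => δ * t + b j) '' Icc 0 1 = Icc 0 1 := by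
  have hN0 : (0 : K) < N := by exact_mod_cast hN
  have hδ0 : 0 < δ := by rw [hδ]; positivity
  calc ⋃ j ∈ Finset.Icc 1 N, (fun t => δ * t + b j) '' Icc 0 1
      = ⋃ j ∈ Finset.Icc 1 N, Icc (((j : K) - 1) * δ) (j * δ) := by
        refine iUnion₂_congr fun j hj => ?_
        rw [Finset.mem_Icc] at hj
        rw [image_mul_add_unitInterval hδ0, hb j hj.1 hj.2]
        congr 1
        ring
    _ = Icc 0 (N * δ) := iUnion_Icc_sub_one_mul hδ0.le hN
    _ = Icc 0 1 := by rw [hδ, mul_one_div_cancel hN0.ne']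

end Cover

section BoundedCurves

variable {E : Type*} [NormedAddCommGroup E] [NormedSpace ℝ E] {R s : ℕ} {σ τ : ℝ → E}
  {ε δ c m M : ℝ}

/-- The supremum `‖d^s τ‖` over `[0, 1]` of the norm of the `s`-th derivative of a curve `τ`. Being
a real-valued `⨆`, it is meaningful only when that norm is bounded on `[0, 1]`, for instance when
`τ` is `C^s`. -/
noncomputable def derivSup (s : ℕ) (τ : ℝ → E) : ℝ :=
  ⨆ t : Icc (0 : ℝ) 1, ‖iteratedDeriv s τ t‖

/-- A bounded `C^R` curve: `max_{2 ≤ s ≤ R} ‖d^s τ‖ ≤ (1/6) ‖dτ‖`. The maximum is written as a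
family of inequalities, so that `R = 1` imposes no condition on the derivatives. -/
structure IsBoundedCurve (R : ℕ) (τ : ℝ → E) : Prop where
  contDiff : ContDiff ℝ R τ
  derivSup_le : ∀ s, 2 ≤ s → s ≤ R → derivSup s τ ≤ 1 / 6 * derivSup 1 τ

/-- An `ε`-bounded `C^R` curve: a bounded curve with `‖dτ‖ ≤ ε`. -/
structure IsEpsBoundedCurve (R : ℕ) (ε : ℝ) (τ : ℝ → E) : Prop extends IsBoundedCurve R τ where
  derivSup_one_le : derivSup 1 τ ≤ ε

theorem derivSup_nonneg : 0 ≤ derivSup s τ :=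
  Real.iSup_nonneg fun _ => norm_nonneg _

theorem norm_iteratedDeriv_le_derivSup (hτ : ContDiff ℝ s τ) {t : ℝ} (ht : t ∈ Icc (0 : ℝ) 1) :
    ‖iteratedDeriv s τ t‖ ≤ derivSup s τ := by
  have hcont : Continuous fun u : Icc (0 : ℝ) 1 => ‖iteratedDeriv s τ u‖ :=
    ((hτ.continuous_iteratedDeriv s le_rfl).comp continuous_subtype_val).norm
  exact le_ciSup (isCompact_range hcont).bddAbove ⟨t, ht⟩

theorem norm_iteratedDeriv_comp_mul_add (hσ : ContDiff ℝ s σ) (hδ : 0 ≤ δ) (c t : ℝ) :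
    ‖iteratedDeriv s (fun u => σ (δ * u + c)) t‖ = δ ^ s * ‖iteratedDeriv s σ (δ * t + c)‖ := by
  have hσc : ContDiff ℝ s fun u => σ (u + c) := by fun_prop
  rw [iteratedDeriv_comp_const_smul hσc, iteratedDeriv_comp_add_const, norm_smul,
    Real.norm_of_nonneg (pow_nonneg hδ s)]

theorem derivSup_comp_mul_add_le (hσ : ContDiff ℝ s σ) (hδ : 0 ≤ δ)
    (hmaps : MapsTo (fun t => δ * t + c) (Icc 0 1) (Icc 0 1)) :
    derivSup s (fun u => σ (δ * u + c)) ≤ δ ^ s * derivSup s σ := by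
  refine ciSup_le fun t => ?_
  rw [norm_iteratedDeriv_comp_mul_add hσ hδ]
  gcongr
  exact norm_iteratedDeriv_le_derivSup hσ (hmaps t.2)

theorem pow_mul_le_derivSup_comp_mul_add (hσ : ContDiff ℝ s σ) (hδ : 0 ≤ δ)
    (hmaps : MapsTo (fun t => δ * t + c) (Icc 0 1) (Icc 0 1))
    (hm : ∀ t ∈ Icc (0 : ℝ) 1, m ≤ ‖iteratedDeriv s σ t‖) :
    δ ^ s * m ≤ derivSup s (fun u => σ (δ * u + c)) := by
  have h0 : (0 : ℝ) ∈ Icc 0 1 := left_mem_Icc.2 zero_le_one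
  calc δ ^ s * m ≤ δ ^ s * ‖iteratedDeriv s σ (δ * 0 + c)‖ := by gcongr; exact hm _ (hmaps h0)
    _ = ‖iteratedDeriv s (fun u => σ (δ * u + c)) 0‖ :=
        (norm_iteratedDeriv_comp_mul_add hσ hδ c 0).symm
    _ ≤ derivSup s (fun u => σ (δ * u + c)) := norm_iteratedDeriv_le_derivSup (by fun_prop) h0

theorem isBoundedCurve_comp_mul_add (hσ : ContDiff ℝ R σ) (hδ0 : 0 ≤ δ) (hδ1 : δ ≤ 1)
    (hmaps : MapsTo (fun t => δ * t + c) (Icc 0 1) (Icc 0 1))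
    (hM : ∀ s, 2 ≤ s → s ≤ R → derivSup s σ ≤ M)
    (hm : ∀ t ∈ Icc (0 : ℝ) 1, m ≤ ‖deriv σ t‖) (hδm : δ * M ≤ 1 / 6 * m) :
    IsBoundedCurve R fun u => σ (δ * u + c) where
  contDiff := by fun_prop
  derivSup_le s hs hsR := by
    have hlower : δ ^ 1 * m ≤ derivSup 1 fun u => σ (δ * u + c) :=
      pow_mul_le_derivSup_comp_mul_add
        (hσ.of_le (mod_cast one_le_two.trans (hs.trans hsR))) hδ0 hmaps
        (by simpa only [iteratedDeriv_one] using hm)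
    calc derivSup s (fun u => σ (δ * u + c))
        ≤ δ ^ s * derivSup s σ := derivSup_comp_mul_add_le (hσ.of_le (mod_cast hsR)) hδ0 hmaps
      _ ≤ δ ^ 2 * M :=
        mul_le_mul (pow_le_pow_of_le_one hδ0 hδ1 hs) (hM s hs hsR) derivSup_nonneg (sq_nonneg δ)
      _ = δ * (δ * M) := by ring
      _ ≤ δ * (1 / 6 * m) := by gcongr
      _ = 1 / 6 * (δ ^ 1 * m) := by ring
      _ ≤ 1 / 6 * derivSup 1 (fun u => σ (δ * u + c)) := by gcongr

theorem isEpsBoundedCurve_comp_mul_add (hR : 1 ≤ R) (hσ : ContDiff ℝ R σ) (hδ0 : 0 ≤ δ)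
    (hδ1 : δ ≤ 1) (hmaps : MapsTo (fun t => δ * t + c) (Icc 0 1) (Icc 0 1))
    (hM : ∀ s, 1 ≤ s → s ≤ R → derivSup s σ ≤ M)
    (hm : ∀ t ∈ Icc (0 : ℝ) 1, m ≤ ‖deriv σ t‖) (hδm : δ * M ≤ 1 / 6 * m)
    (hδε : δ * M ≤ ε) : IsEpsBoundedCurve R ε fun u => σ (δ * u + c) where
  toIsBoundedCurve := isBoundedCurve_comp_mul_add hσ hδ0 hδ1 hmaps
    (fun s hs => hM s (one_le_two.trans hs)) hm hδm
  derivSup_one_le :=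
    calc derivSup 1 (fun u => σ (δ * u + c))
        ≤ δ ^ 1 * derivSup 1 σ := derivSup_comp_mul_add_le (hσ.of_le (mod_cast hR)) hδ0 hmaps
      _ ≤ δ * M := by rw [pow_one]; gcongr; exact hM 1 le_rfl hR
      _ ≤ ε := hδε

end BoundedCurves

theorem decomposition_into_bounded_curves_general
    {E : Type*} [NormedAddCommGroup E] [NormedSpace ℝ E]
    {R : ℕ} (hR : 1 ≤ R) {σ : ℝ → E} (hσ : ContDiff ℝ R σ) {m M : ℝ}
    (hM : ∀ s, 1 ≤ s → s ≤ R → derivSup s σ ≤ M)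
    (hm : ∀ t ∈ Icc (0 : ℝ) 1, m ≤ ‖deriv σ t‖)
    {N : ℕ} (hN : 1 ≤ N) {δ : ℝ} (hδ : δ = 1 / N) (hδm : δ * M ≤ 1 / 6 * m)
    {ε : ℝ} (hδε : δ * M ≤ ε)
    {b : ℕ → ℝ} (hb : ∀ j, 1 ≤ j → j ≤ N → b j = (j - 1) * δ) :
    σ '' Icc 0 1 = ⋃ j ∈ Finset.Icc 1 N, (fun t => σ (δ * t + b j)) '' Icc 0 1 ∧
      ∀ j, 1 ≤ j → j ≤ N → IsEpsBoundedCurve R ε fun t => σ (δ * t + b j) := by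
  have hcover := iUnion_image_mul_add_eq_unitInterval hN hδ hb
  have hδ0 : 0 ≤ δ := by rw [hδ]; positivity
  have hδ1 : δ ≤ 1 := hδ ▸ div_le_one_of_le₀ (mod_cast hN) (Nat.cast_nonneg N)
  refine ⟨?_, fun j hj hjN => ?_⟩
  · conv_lhs => rw [← hcover, image_iUnion₂]
    simp only [image_image]
  · have hmaps : MapsTo (fun t => δ * t + b j) (Icc 0 1) (Icc 0 1) := by
      rw [mapsTo_iff_image_subset]
      exact (subset_iUnion₂ j (Finset.mem_Icc.2 ⟨hj, hjN⟩)).trans hcover.subset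
    exact isEpsBoundedCurve_comp_mul_add hR hσ hδ0 hδ1 hmaps hM hm hδm hδε

/-- Decomposition into `ε`-bounded curves: a `C^R` curve `σ` with all derivatives of
order `1 ≤ s ≤ R` bounded by `1` on `[0,1]` and `‖σ'‖ ≥ 1/2` on `[0,1]` is covered,
after the explicit affine reparametrizations `θ_j (t) = δ t + b_j`
(`N = ⌈1/ε⌉`, `δ = 1/N`, `b_j = (j-1)δ` for `1 ≤ j < N`, `b_N = 1 - δ`), by the
`N` curves `σ_j = σ ∘ θ_j`, each of which is `ε`-bounded:
`sup_{[0,1]} ‖σ_j'‖ ≤ ε` and `sup_{[0,1]} ‖σ_j^{(s)}‖ ≤ (1/6) sup_{[0,1]} ‖σ_j'‖`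
for `2 ≤ s ≤ R`. -/
theorem decomposition_into_bounded_curves
    {E : Type*} [NormedAddCommGroup E] [NormedSpace ℝ E]
    (R : ℕ) (hR : 1 ≤ R) (ε : ℝ) (hε0 : 0 < ε) (hε : ε ≤ 1 / 100)
    (σ : ℝ → E) (hσ : ContDiff ℝ (R : ℕ∞) σ)
    (hCr : ∀ s : ℕ, 1 ≤ s → s ≤ R →
      (⨆ t : Set.Icc (0 : ℝ) 1, ‖iteratedDeriv s σ t.1‖) ≤ 1)
    (hlow : ∀ t ∈ Set.Icc (0 : ℝ) 1, 1 / 2 ≤ ‖deriv σ t‖)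
    (N : ℕ) (hN : N = ⌈1 / ε⌉₊) (δ : ℝ) (hδ : δ = 1 / (N : ℝ))
    (b : ℕ → ℝ) (hb : ∀ j : ℕ, 1 ≤ j → j < N → b j = ((j : ℝ) - 1) * δ)
    (hbN : b N = 1 - δ) :
    -- (i) the images of the reparametrized curves cover the image of `σ`
    (σ '' Set.Icc (0 : ℝ) 1 =
      ⋃ j ∈ Finset.Icc 1 N, (fun t : ℝ => σ (δ * t + b j)) '' Set.Icc (0 : ℝ) 1) ∧
    -- (ii) first derivative bound
    (∀ j : ℕ, 1 ≤ j → j ≤ N →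
      (⨆ t : Set.Icc (0 : ℝ) 1, ‖deriv (fun u : ℝ => σ (δ * u + b j)) t.1‖) ≤ ε) ∧
    -- (iii) higher order derivative bounds
    (∀ j : ℕ, 1 ≤ j → j ≤ N → ∀ s : ℕ, 2 ≤ s → s ≤ R →
      (⨆ t : Set.Icc (0 : ℝ) 1, ‖iteratedDeriv s (fun u : ℝ => σ (δ * u + b j)) t.1‖) ≤
        (1 / 6) * ⨆ t : Set.Icc (0 : ℝ) 1, ‖deriv (fun u : ℝ => σ (δ * u + b j)) t.1‖) := by
  have hNε : 1 / ε ≤ N := hN ▸ Nat.le_ceil _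
  have hN0 : (0 : ℝ) < N := (one_div_pos.2 hε0).trans_le hNε
  have hδε : δ ≤ ε := hδ ▸ (one_div_le hε0 hN0).1 hNε
  have hb' : ∀ j, 1 ≤ j → j ≤ N → b j = (j - 1) * δ := by
    intro j hj hjN
    rcases hjN.lt_or_eq with hlt | rfl
    · exact hb j hj hlt
    · rw [hbN, sub_mul, one_mul, hδ, mul_one_div_cancel hN0.ne']
  obtain ⟨hcover, hbounded⟩ := decomposition_into_bounded_curves_general hR (mod_cast hσ) hCr hlow
    (mod_cast hN0) hδ (by linarith) ((mul_one δ).trans_le hδε) hb'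
  refine ⟨hcover, fun j hj hjN => ?_, fun j hj hjN s hs hsR => ?_⟩
  · have hε := (hbounded j hj hjN).derivSup_one_le
    simpa only [derivSup, iteratedDeriv_one] using hε
  · have hs' := (hbounded j hj hjN).derivSup_le s hs hsR
    simpa only [derivSup, iteratedDeriv_one] using hs'
end

section
/- For all real numbers a > 0, b > 0 and every n ∈ ℕ, ∫_0^b u³ |cos(aⁿ/u)| du ≥ a^{4n} b⁴ / (2π (aⁿ + 2πb)⁴). -/
/-!
The substitution `u = c / t` turns `∫₀ᵇ uᵖ |cos (c / u)| du` into `cᵖ⁺¹` times the integral of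
`t ^ (-(p + 2)) |cos t|` over `(c / b, ∞)`. Integrating a nonnegative `P`-periodic weight `f`
against an antitone `g` over a period gives at least `∫₀ᴾ f` times the value of `g` at the right
end, which in turn is at least the mean of `g` over the *next* period. Hence replacing `f` by its
mean value costs no more than moving the left end of the half-line by `P`.
For `f = |cos|` the mean value is `2 / π`.
-/

open MeasureTheory Set Filter Topology
open scoped Real

section AntitoneWeight

variable {f g : ℝ → ℝ} {a b : ℝ}

lemma intervalIntegral_mul_right_endpoint_le (hab : a ≤ b) (hg : AntitoneOn g (Icc a b))
    (hf₀ : ∀ t ∈ Icc a b, 0 ≤ f t) (hf : IntervalIntegrable f volume a b)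
    (hgf : IntervalIntegrable (fun t ↦ g t * f t) volume a b) :
    (∫ t in a..b, f t) * g b ≤ ∫ t in a..b, g t * f t := by
  rw [mul_comm, ← intervalIntegral.integral_const_mul]
  refine intervalIntegral.integral_mono_on hab (hf.const_mul _) hgf fun t ht ↦ ?_
  exact mul_le_mul_of_nonneg_right (hg ht (right_mem_Icc.2 hab) ht.2) (hf₀ t ht)

lemma intervalIntegral_le_length_mul_left_endpoint (hab : a ≤ b) (hg : AntitoneOn g (Icc a b)) :
    ∫ t in a..b, g t ≤ (b - a) * g a := by
  rw [← smul_eq_mul, ← intervalIntegral.integral_const]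
  refine intervalIntegral.integral_mono_on hab ?_ intervalIntegrable_const
    fun t ht ↦ hg (left_mem_Icc.2 hab) ht ht.1
  exact AntitoneOn.intervalIntegrable (by rwa [uIcc_of_le hab])

end AntitoneWeight

section PeriodicWeight

variable {f g : ℝ → ℝ} {P T : ℝ}

lemma integral_period_mul_integral_next_period_le (hP : 0 ≤ P) (hf : Function.Periodic f P)
    (hf₀ : ∀ t, 0 ≤ f t) (hfi : IntervalIntegrable f volume T (T + P))
    (hg : AntitoneOn g (Icc T (T + P + P)))
    (hgf : IntervalIntegrable (fun t ↦ g t * f t) volume T (T + P)) :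
    (∫ t in 0..P, f t) * ∫ t in (T + P)..(T + P + P), g t ≤
      P * ∫ t in T..(T + P), g t * f t := by
  have integral_period_nonneg : 0 ≤ ∫ t in 0..P, f t :=
    intervalIntegral.integral_nonneg hP fun t _ ↦ hf₀ t
  have shift : ∫ t in 0..P, f t = ∫ t in T..(T + P), f t := by
    simpa using hf.intervalIntegral_add_eq 0 T
  calc (∫ t in 0..P, f t) * ∫ t in (T + P)..(T + P + P), g t
      ≤ (∫ t in 0..P, f t) * (P * g (T + P)) := by
        gcongr
        simpa using intervalIntegral_le_length_mul_left_endpoint (by linarith)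
          (hg.mono (Icc_subset_Icc_left (by linarith)) :
            AntitoneOn g (Icc (T + P) (T + P + P)))
    _ = P * ((∫ t in T..(T + P), f t) * g (T + P)) := by rw [shift]; ring
    _ ≤ P * ∫ t in T..(T + P), g t * f t := by
        gcongr
        exact intervalIntegral_mul_right_endpoint_le (by linarith)
          (hg.mono (Icc_subset_Icc_right (by linarith))) (fun t _ ↦ hf₀ t) hfi hgf

lemma integral_period_mul_intervalIntegral_le (hP : 0 < P) (hf : Function.Periodic f P)
    (hf₀ : ∀ t, 0 ≤ f t) (hfi : IntervalIntegrable f volume 0 P)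
    (hg : AntitoneOn g (Ici T)) (hgf : IntegrableOn (fun t ↦ g t * f t) (Ioi T)) (N : ℕ) :
    (∫ t in 0..P, f t) * ∫ t in (T + P)..(T + N * P + P), g t ≤
      P * ∫ t in T..(T + N * P), g t * f t := by
  have hgi (x y : ℝ) (hx : T ≤ x) (hy : T ≤ y) : IntervalIntegrable g volume x y :=
    AntitoneOn.intervalIntegrable (hg.mono fun _ ht ↦ (le_inf hx hy).trans ht.1)
  have hgfi (x y : ℝ) (hx : T ≤ x) (hy : T ≤ y) :
      IntervalIntegrable (fun t ↦ g t * f t) volume x y :=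
    intervalIntegrable_iff.2 (hgf.mono_set fun _ ht ↦ (le_inf hx hy).trans_lt ht.1)
  induction N with
  | zero => simp
  | succ N ih =>
    have node_succ : T + (N + 1 : ℕ) * P = T + N * P + P := by push_cast; ring
    have hN : T ≤ T + N * P := le_add_of_nonneg_right (by positivity)
    rw [node_succ,
      ← intervalIntegral.integral_add_adjacent_intervals
        (hgi (T + P) (T + N * P + P) (by linarith) (by linarith))
        (hgi _ (T + N * P + P + P) (by linarith) (by linarith)),
      ← intervalIntegral.integral_add_adjacent_intervals
        (hgfi T (T + N * P) le_rfl hN) (hgfi _ (T + N * P + P) hN (by linarith)),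
      mul_add, mul_add]
    exact add_le_add ih <| integral_period_mul_integral_next_period_le hP.le hf hf₀
      (hf.intervalIntegrable₀ hP.ne' hfi _ _) (hg.mono fun _ ht ↦ hN.trans ht.1)
      (hgfi _ _ hN (by linarith))

theorem integral_period_mul_integral_Ioi_le (hP : 0 < P) (hf : Function.Periodic f P)
    (hf₀ : ∀ t, 0 ≤ f t) (hfi : IntervalIntegrable f volume 0 P)
    (hg : AntitoneOn g (Ici T)) (hgi : IntegrableOn g (Ioi T))
    (hgf : IntegrableOn (fun t ↦ g t * f t) (Ioi T)) :
    (∫ t in 0..P, f t) * ∫ t in Ioi (T + P), g t ≤ P * ∫ t in Ioi T, g t * f t := by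
  have nodes_tendsto : Tendsto (fun N : ℕ ↦ T + N * P) atTop atTop :=
    tendsto_atTop_add_const_left _ _ (tendsto_natCast_atTop_atTop.atTop_mul_const hP)
  have lower := intervalIntegral_tendsto_integral_Ioi (T + P)
    (hgi.mono_set (Ioi_subset_Ioi (by linarith))) (tendsto_atTop_add_const_right _ P nodes_tendsto)
  have upper := intervalIntegral_tendsto_integral_Ioi T hgf nodes_tendsto
  exact le_of_tendsto_of_tendsto' (lower.const_mul _) (upper.const_mul P)
    (integral_period_mul_intervalIntegral_le hP hf hf₀ hfi hg hgf)

end PeriodicWeight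

section AbsCos

lemma abs_cos_periodic : Function.Periodic (fun t ↦ |Real.cos t|) π := fun t ↦ by
  simp only [Real.cos_antiperiodic t, abs_neg]

lemma integral_abs_cos_zero_pi : ∫ t in 0..π, |Real.cos t| = 2 := by
  calc ∫ t in 0..π, |Real.cos t| = ∫ t in (-(π / 2))..(π / 2), |Real.cos t| := by
        have := abs_cos_periodic.intervalIntegral_add_eq 0 (-(π / 2))
        rwa [zero_add, show -(π / 2) + π = π / 2 by ring] at this
    _ = ∫ t in (-(π / 2))..(π / 2), Real.cos t := by
        refine intervalIntegral.integral_congr fun t ht ↦ ?_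
        rw [uIcc_of_le (by linarith [Real.pi_pos])] at ht
        exact abs_of_nonneg (Real.cos_nonneg_of_mem_Icc ht)
    _ = 2 := by
        rw [integral_cos, Real.sin_neg, Real.sin_pi_div_two]
        norm_num

lemma le_integral_Ioi_rpow_mul_abs_cos {r T : ℝ} (hr : r < -1) (hT : 0 < T) :
    2 / π * (-(T + π) ^ (r + 1) / (r + 1)) ≤ ∫ t in Ioi T, t ^ r * |Real.cos t| := by
  have rpow_integrable : IntegrableOn (fun t : ℝ ↦ t ^ r) (Ioi T) :=
    integrableOn_Ioi_rpow_of_lt hr hT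
  have rpow_antitone : AntitoneOn (fun t : ℝ ↦ t ^ r) (Ici T) :=
    (Real.antitoneOn_rpow_Ioi_of_exponent_nonpos (by linarith)).mono (Ici_subset_Ioi.2 hT)
  have rpow_mul_integrable : IntegrableOn (fun t : ℝ ↦ t ^ r * |Real.cos t|) (Ioi T) :=
    rpow_integrable.mul_bdd (c := 1) (by fun_prop) (ae_of_all _ fun t ↦ by
      simpa using Real.abs_cos_le_one t)
  have key := integral_period_mul_integral_Ioi_le Real.pi_pos abs_cos_periodic
    (fun t ↦ abs_nonneg _) (Real.continuous_cos.abs.intervalIntegrable 0 π) rpow_antitone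
    rpow_integrable rpow_mul_integrable
  rw [integral_abs_cos_zero_pi, integral_Ioi_rpow_of_lt hr (by positivity)] at key
  rwa [div_mul_eq_mul_div, div_le_iff₀' Real.pi_pos]

end AbsCos

section Inversion

variable {b c : ℝ}

lemma image_const_div_Ici_eq_Ioc (hb : 0 < b) (hc : 0 < c) :
    (fun t ↦ c / t) '' Ici (c / b) = Ioc 0 b := by
  ext u
  constructor
  · rintro ⟨t, ht, rfl⟩
    have ht₀ : 0 < t := (div_pos hc hb).trans_le ht
    exact ⟨div_pos hc ht₀, (div_le_comm₀ hb ht₀).1 ht⟩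
  · rintro ⟨hu₀, hu⟩
    exact ⟨c / u, div_le_div_of_nonneg_left hc.le hu₀ hu, div_div_cancel₀ hc.ne'⟩

lemma integral_Ioc_zero_eq_integral_Ioi_const_div {E : Type*} [NormedAddCommGroup E]
    [NormedSpace ℝ E] (hb : 0 < b) (hc : 0 < c) (F : ℝ → E) :
    ∫ u in Ioc 0 b, F u = ∫ t in Ioi (c / b), (c / t ^ 2) • F (c / t) := by
  have pos {t : ℝ} (ht : t ∈ Ici (c / b)) : 0 < t := (div_pos hc hb).trans_le ht
  have deriv_const_div : ∀ t ∈ Ici (c / b),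
      HasDerivWithinAt (fun t ↦ c / t) (-(c / t ^ 2)) (Ici (c / b)) t := fun t ht ↦ by
    simpa [div_eq_mul_inv] using ((hasDerivAt_inv (pos ht).ne').const_mul c).hasDerivWithinAt
  have antitone_const_div : AntitoneOn (fun t ↦ c / t) (Ici (c / b)) := fun s hs t _ hst ↦
    div_le_div_of_nonneg_left hc.le (pos hs) hst
  rw [← image_const_div_Ici_eq_Ioc hb hc, integral_image_eq_integral_deriv_smul_of_antitoneOn
    measurableSet_Ici deriv_const_div antitone_const_div, integral_Ici_eq_integral_Ioi]
  simp only [neg_neg]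

lemma integral_Ioc_rpow_mul_comp_const_div (hb : 0 < b) (hc : 0 < c) (p : ℝ) (f : ℝ → ℝ) :
    ∫ u in Ioc 0 b, u ^ p * f (c / u) =
      c ^ (p + 1) * ∫ t in Ioi (c / b), t ^ (-(p + 2)) * f t := by
  rw [integral_Ioc_zero_eq_integral_Ioi_const_div hb hc, ← integral_const_mul]
  refine setIntegral_congr_fun measurableSet_Ioi fun t ht ↦ ?_
  have ht₀ : 0 < t := (div_pos hc hb).trans ht
  simp only [smul_eq_mul, div_div_cancel₀ hc.ne']
  rw [Real.div_rpow hc.le ht₀.le, Real.rpow_add_one hc.ne', Real.rpow_neg ht₀.le,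
    Real.rpow_add ht₀, Real.rpow_two]
  field_simp

end Inversion

theorem le_integral_Ioc_rpow_mul_abs_cos_const_div {b c p : ℝ} (hb : 0 < b) (hc : 0 < c)
    (hp : -1 < p) :
    2 / (π * (p + 1)) * (c * b / (c + π * b)) ^ (p + 1) ≤
      ∫ u in Ioc 0 b, u ^ p * |Real.cos (c / u)| := by
  have hT : 0 < c / b + π := by positivity
  have base_eq : c * b / (c + π * b) = c / (c / b + π) := by field_simp
  calc 2 / (π * (p + 1)) * (c * b / (c + π * b)) ^ (p + 1)
      = c ^ (p + 1) * (2 / π * (-(c / b + π) ^ (-(p + 2) + 1) / (-(p + 2) + 1))) := by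
        rw [base_eq, Real.div_rpow hc.le hT.le, show -(p + 2) + 1 = -(p + 1) by ring,
          Real.rpow_neg hT.le]
        field_simp
    _ ≤ c ^ (p + 1) * ∫ t in Ioi (c / b), t ^ (-(p + 2)) * |Real.cos t| := by
        gcongr
        exact le_integral_Ioi_rpow_mul_abs_cos (by linarith) (by positivity)
    _ = ∫ u in Ioc 0 b, u ^ p * |Real.cos (c / u)| :=
        (integral_Ioc_rpow_mul_comp_const_div hb hc p fun t ↦ |Real.cos t|).symm

/-- For all `a, b > 0` and `n ∈ ℕ`,
`∫_0^b u³ |cos(aⁿ/u)| du ≥ a^{4n} b⁴ / (2π (aⁿ + 2πb)⁴)`,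
the integral being the Lebesgue integral over `(0, b]`. -/
theorem integral_cube_abs_cos_lower_bound (a b : ℝ) (ha : 0 < a) (hb : 0 < b) (n : ℕ) :
    a ^ (4 * n) * b ^ 4 / (2 * Real.pi * (a ^ n + 2 * Real.pi * b) ^ 4) ≤
      ∫ u in Set.Ioc (0 : ℝ) b, u ^ 3 * |Real.cos (a ^ n / u)| := by
  have sharper : 2 / (π * 4) * (a ^ n * b / (a ^ n + π * b)) ^ 4 ≤
      ∫ u in Ioc 0 b, u ^ 3 * |Real.cos (a ^ n / u)| := by
    simpa only [show (3 : ℝ) + 1 = 4 by norm_num, Real.rpow_ofNat] using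
      le_integral_Ioc_rpow_mul_abs_cos_const_div (p := 3) hb (pow_pos ha n) (by norm_num)
  calc a ^ (4 * n) * b ^ 4 / (2 * π * (a ^ n + 2 * π * b) ^ 4)
      ≤ a ^ (4 * n) * b ^ 4 / (2 * π * (a ^ n + π * b) ^ 4) := by
        gcongr
        linarith [Real.pi_pos]
    _ = 2 / (π * 4) * (a ^ n * b / (a ^ n + π * b)) ^ 4 := by
        rw [mul_comm 4 n, pow_mul]
        field_simp
        norm_num
    _ ≤ ∫ u in Ioc 0 b, u ^ 3 * |Real.cos (a ^ n / u)| := sharper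
end

section
/- Fix a real number a with a ≥ 3^{1/4}. Then limsup_{n→∞} (1/n) log Lₙ = 0. -/
/-!
The linear map `diag(A, B)` sends the graph of `σ` to the graph of `u ↦ B * σ (u / A)`, whose slope
at `u` is `B / A` times the slope of `σ` at `u / A`. If `|σ' x| ≤ C * |x| ^ m`, then over `|u| ≤ 1`
the new slope is at most `C * |B| / |A| ^ (m + 1)`, so flatness of `σ` at the repeller compensates
the stretching as soon as `|B| ≤ |A| ^ (m + 1)`; if also `|σ x| ≤ |x| ^ (m + 1)`, the part of the
image over `[0, 1]` stays in the square, so its length is at least `1`. For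
`σ x = x ^ 5 * sin (1 / x)` one can take `m = 3`, and `A = a ^ n`, `B = 3 ^ n` satisfy the condition
when `3 ≤ a ^ 4`. The lengths then stay between two positive constants and have no exponential
growth.
-/

open Filter MeasureTheory Set Topology

section Growth

variable {ι : Type*} {l : Filter ι} {c L : ι → ℝ} {r R : ℝ}

theorem tendsto_mul_log_of_mem_Icc (hc : Tendsto c l (𝓝 0)) (hr : 0 < r)
    (hL : ∀ᶠ i in l, L i ∈ Icc r R) : Tendsto (fun i ↦ c i * Real.log (L i)) l (𝓝 0) := by
  refine hc.zero_mul_isBoundedUnder_le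
    (isBoundedUnder_of_eventually_le (a := max |Real.log r| |Real.log R|) ?_)
  filter_upwards [hL] with i hi
  exact abs_le_max_abs_abs (Real.log_le_log hr hi.1) (Real.log_le_log (hr.trans_le hi.1) hi.2)

end Growth

section GraphLength

variable {f : ℝ → ℝ} {s : Set ℝ} {K : ℝ}

/-- The arclength of the part of the graph of `f` lying over `s`. -/
noncomputable def graphLength (f : ℝ → ℝ) (s : Set ℝ) : ℝ :=
  ∫ u in s, √(1 + deriv f u ^ 2)

theorem sqrt_one_add_sq_le_of_abs_le {x : ℝ} (hx : |x| ≤ K) : √(1 + x ^ 2) ≤ √(1 + K ^ 2) :=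
  Real.sqrt_le_sqrt (by grw [← sq_abs x, hx])

theorem integrableOn_sqrt_one_add_deriv_sq (hs : volume s ≠ ⊤)
    (hf : ∀ᵐ u ∂volume.restrict s, |deriv f u| ≤ K) :
    IntegrableOn (fun u ↦ √(1 + deriv f u ^ 2)) s := by
  refine Measure.integrableOn_of_bounded (M := √(1 + K ^ 2)) hs ?_ ?_
  · exact (((measurable_deriv f).pow_const 2).const_add 1).sqrt.aestronglyMeasurable
  · filter_upwards [hf] with u hu
    rw [Real.norm_of_nonneg (Real.sqrt_nonneg _)]
    exact sqrt_one_add_sq_le_of_abs_le hu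

theorem volume_real_le_graphLength (hs : volume s ≠ ⊤)
    (hf : ∀ᵐ u ∂volume.restrict s, |deriv f u| ≤ K) : volume.real s ≤ graphLength f s := by
  have h : ∫ _ in s, (1 : ℝ) ≤ graphLength f s :=
    setIntegral_mono (integrableOn_const hs) (integrableOn_sqrt_one_add_deriv_sq hs hf)
      fun u ↦ Real.one_le_sqrt.2 (le_add_of_nonneg_right (sq_nonneg _))
  simpa using h

theorem graphLength_le (hs : volume s ≠ ⊤)
    (hf : ∀ᵐ u ∂volume.restrict s, |deriv f u| ≤ K) :
    graphLength f s ≤ volume.real s * √(1 + K ^ 2) := by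
  have h : graphLength f s ≤ ∫ _ in s, √(1 + K ^ 2) :=
    setIntegral_mono_ae_restrict (integrableOn_sqrt_one_add_deriv_sq hs hf) (integrableOn_const hs)
      (hf.mono fun u hu ↦ sqrt_one_add_sq_le_of_abs_le hu)
  simpa using h

end GraphLength

section DiagImage

variable {σ : ℝ → ℝ} {A B C u : ℝ} {m : ℕ}

/-- The function whose graph is the image of the graph of `σ` under the linear map `diag(A, B)`
with `A ≠ 0`. -/
noncomputable def diagImage (A B : ℝ) (σ : ℝ → ℝ) (u : ℝ) : ℝ :=
  B * σ (u / A)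

theorem deriv_diagImage (A B : ℝ) (σ : ℝ → ℝ) (u : ℝ) :
    deriv (diagImage A B σ) u = B / A * deriv σ (u / A) := by
  have h : diagImage A B σ = fun v ↦ B * σ (A⁻¹ * v) := by
    funext v
    rw [diagImage, div_eq_inv_mul]
  rw [h, deriv_const_mul_field, deriv_comp_mul_left, smul_eq_mul, div_eq_inv_mul u]
  ring

theorem abs_div_le_one (hA : 1 ≤ |A|) (hu : |u| ≤ 1) : |u / A| ≤ 1 := by
  rw [abs_div]
  exact div_le_one_of_le₀ (hu.trans hA) (abs_nonneg A)

theorem abs_mul_abs_div_pow_le_one (hA : A ≠ 0) (hB : |B| ≤ |A| ^ m) (hu : |u| ≤ 1) :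
    |B| * |u / A| ^ m ≤ 1 := by
  have hA' : 0 < |A| ^ m := pow_pos (abs_pos.2 hA) m
  calc |B| * |u / A| ^ m = |B| / |A| ^ m * |u| ^ m := by rw [abs_div, div_pow]; ring
    _ ≤ 1 := mul_le_one₀ ((div_le_one hA').2 hB) (by positivity)
      (pow_le_one₀ (abs_nonneg u) hu)

theorem abs_diagImage_le_one (hA : 1 ≤ |A|) (hB : |B| ≤ |A| ^ m)
    (hσ : ∀ x, |x| ≤ 1 → |σ x| ≤ |x| ^ m) (hu : |u| ≤ 1) : |diagImage A B σ u| ≤ 1 :=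
  calc |diagImage A B σ u| = |B| * |σ (u / A)| := abs_mul _ _
    _ ≤ |B| * |u / A| ^ m := by grw [hσ _ (abs_div_le_one hA hu)]
    _ ≤ 1 := abs_mul_abs_div_pow_le_one (abs_pos.1 (zero_lt_one.trans_le hA)) hB hu

theorem abs_deriv_diagImage_le (hA : 1 ≤ |A|) (hB : |B| ≤ |A| ^ (m + 1))
    (hσ' : ∀ x, x ≠ 0 → |x| ≤ 1 → |deriv σ x| ≤ C * |x| ^ m) (hu₀ : u ≠ 0) (hu : |u| ≤ 1) :
    |deriv (diagImage A B σ) u| ≤ C := by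
  have hA₀ : 0 < |A| := zero_lt_one.trans_le hA
  have hA_ne : A ≠ 0 := abs_pos.1 hA₀
  have hC : 0 ≤ C := by simpa using (abs_nonneg _).trans (hσ' 1 one_ne_zero (by simp))
  have hBA : |B / A| ≤ |A| ^ m := by
    rwa [abs_div, div_le_iff₀ hA₀, ← pow_succ]
  calc |deriv (diagImage A B σ) u| = |B / A| * |deriv σ (u / A)| := by
        rw [deriv_diagImage, abs_mul]
    _ ≤ |B / A| * (C * |u / A| ^ m) := by
        grw [hσ' _ (div_ne_zero hu₀ hA_ne) (abs_div_le_one hA hu)]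
    _ = C * (|B / A| * |u / A| ^ m) := by ring
    _ ≤ C := mul_le_of_le_one_right hC (abs_mul_abs_div_pow_le_one hA_ne hBA hu)

theorem graphLength_diagImage_mem_Icc (hA : 1 ≤ |A|) (hB : |B| ≤ |A| ^ (m + 1))
    (hσ : ∀ x, |x| ≤ 1 → |σ x| ≤ |x| ^ (m + 1))
    (hσ' : ∀ x, x ≠ 0 → |x| ≤ 1 → |deriv σ x| ≤ C * |x| ^ m) :
    graphLength (diagImage A B σ) {u | u ∈ Icc 0 1 ∧ |diagImage A B σ u| ≤ 1} ∈
      Icc 1 √(1 + C ^ 2) := by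
  have habs {u : ℝ} (hu : u ∈ Icc (0 : ℝ) 1) : |u| ≤ 1 := (abs_of_nonneg hu.1).trans_le hu.2
  have hset : {u | u ∈ Icc 0 1 ∧ |diagImage A B σ u| ≤ 1} = Icc 0 1 :=
    sep_eq_self_iff_mem_true.2 fun _ hu ↦ abs_diagImage_le_one hA hB hσ (habs hu)
  have hslope : ∀ᵐ u ∂volume.restrict (Icc (0 : ℝ) 1), |deriv (diagImage A B σ) u| ≤ C := by
    filter_upwards [ae_restrict_mem measurableSet_Icc, Measure.ae_ne _ 0] with u hu hu₀
    exact abs_deriv_diagImage_le hA hB hσ' hu₀ (habs hu)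
  have hfin : volume (Icc (0 : ℝ) 1) ≠ ⊤ := measure_Icc_lt_top.ne
  rw [hset]
  exact ⟨by simpa using volume_real_le_graphLength hfin hslope,
    by simpa using graphLength_le hfin hslope⟩

end DiagImage

section FlatSine

variable {x : ℝ}

/-- The oscillating curve `x ↦ x ^ k * sin (1 / x)`; it vanishes at `0` for every `k`, since
`0⁻¹ = 0` and `sin 0 = 0`. -/
noncomputable def flatSine (k : ℕ) (x : ℝ) : ℝ :=
  x ^ k * Real.sin x⁻¹

theorem abs_flatSine_le (k : ℕ) (x : ℝ) : |flatSine k x| ≤ |x| ^ k := by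
  rw [flatSine, abs_mul, abs_pow]
  exact mul_le_of_le_one_right (by positivity) (Real.abs_sin_le_one _)

theorem hasDerivAt_flatSine (m : ℕ) (hx : x ≠ 0) :
    HasDerivAt (flatSine (m + 2))
      ((m + 2) * x ^ (m + 1) * Real.sin x⁻¹ - x ^ m * Real.cos x⁻¹) x := by
  refine ((hasDerivAt_pow (m + 2) x).mul (hasDerivAt_inv hx).sin).congr_deriv ?_
  push_cast
  field_simp
  ring

theorem abs_deriv_flatSine_le (m : ℕ) (hx : x ≠ 0) (hx₁ : |x| ≤ 1) :
    |deriv (flatSine (m + 2)) x| ≤ (m + 3) * |x| ^ m := by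
  rw [(hasDerivAt_flatSine m hx).deriv]
  calc |(m + 2) * x ^ (m + 1) * Real.sin x⁻¹ - x ^ m * Real.cos x⁻¹|
      ≤ (m + 2) * |x| ^ (m + 1) * |Real.sin x⁻¹| + |x| ^ m * |Real.cos x⁻¹| := by
        refine (abs_sub _ _).trans_eq ?_
        simp only [abs_mul, abs_pow, abs_of_nonneg (by positivity : (0 : ℝ) ≤ m + 2)]
    _ ≤ (m + 2) * |x| ^ m * 1 + |x| ^ m * 1 := by
        grw [Real.abs_sin_le_one, Real.abs_cos_le_one,
          pow_le_pow_of_le_one (abs_nonneg x) hx₁ m.le_succ]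
    _ = (m + 3) * |x| ^ m := by ring

theorem diagImage_flatSine (A B : ℝ) (k : ℕ) (u : ℝ) :
    diagImage A B (flatSine k) u = B * (A ^ k)⁻¹ * u ^ k * Real.sin (A / u) := by
  rw [diagImage, flatSine, inv_div, div_pow]
  ring

end FlatSine

theorem repeller_volume_growth_case_large_general {a b : ℝ} {m : ℕ} (ha : 1 ≤ |a|)
    (hb : |b| ≤ |a| ^ (m + 1)) {g : ℕ → ℝ → ℝ}
    (hg : ∀ n u, u ≠ 0 →
      g n u = b ^ n * (a ^ ((m + 2) * n))⁻¹ * u ^ (m + 2) * Real.sin (a ^ n / u))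
    (hg0 : ∀ n, g n 0 = 0) {L : ℕ → ℝ}
    (hL : ∀ n, L n = ∫ u in {u | u ∈ Icc (0 : ℝ) 1 ∧ |g n u| ≤ 1}, √(1 + deriv (g n) u ^ 2)) :
    Tendsto (fun n : ℕ ↦ 1 / (n : ℝ) * Real.log (L n)) atTop (𝓝 0) := by
  have hg_eq (n : ℕ) : g n = diagImage (a ^ n) (b ^ n) (flatSine (m + 2)) := by
    funext u
    rcases eq_or_ne u 0 with rfl | hu
    · simp [hg0, diagImage_flatSine]
    · rw [hg n u hu, diagImage_flatSine, ← pow_mul, mul_comm n]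
  refine tendsto_mul_log_of_mem_Icc tendsto_one_div_atTop_nhds_zero_nat one_pos
    (R := √(1 + (m + 3) ^ 2)) (.of_forall fun n ↦ ?_)
  have hA : 1 ≤ |a ^ n| := by simpa using one_le_pow₀ ha
  have hB : |b ^ n| ≤ |a ^ n| ^ (m + 1) := by
    simpa only [abs_pow, pow_right_comm] using pow_le_pow_left₀ (abs_nonneg b) hb n
  rw [hL, hg_eq]
  exact graphLength_diagImage_mem_Icc hA hB
    (fun x hx ↦ (abs_flatSine_le _ x).trans
      (pow_le_pow_of_le_one (abs_nonneg x) hx (m + 1).le_succ))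
    fun x ↦ abs_deriv_flatSine_le m

/-- Case `a ≥ 3^{1/4}` of the example: with
`gₙ(u) = 3ⁿ a^{-5n} u⁵ sin(aⁿ/u)` (and `gₙ(0) = 0`),
`Iₙ = {u ∈ [0,1] : |gₙ(u)| ≤ 1}` and
`Lₙ = ∫_{Iₙ} √(1 + gₙ'(u)²) du`, one has `limsup (1/n) log Lₙ = 0`. -/
theorem repeller_volume_growth_case_large (a : ℝ) (ha : (3 : ℝ) ^ ((1 : ℝ) / 4) ≤ a)
    (g : ℕ → ℝ → ℝ)
    (hg : ∀ (n : ℕ) (u : ℝ), u ≠ 0 →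
      g n u = 3 ^ n * (a ^ (5 * n))⁻¹ * u ^ 5 * Real.sin (a ^ n / u))
    (hg0 : ∀ n : ℕ, g n 0 = 0)
    (L : ℕ → ℝ)
    (hL : ∀ n : ℕ, L n =
      ∫ u in {u : ℝ | u ∈ Set.Icc (0 : ℝ) 1 ∧ |g n u| ≤ 1},
        Real.sqrt (1 + (deriv (g n) u) ^ 2)) :
    Filter.limsup (fun n : ℕ =>
        (((1 / (n : ℝ)) * Real.log (L n) : ℝ) : EReal)) Filter.atTop = 0 := by
  have ha₁ : 1 ≤ a := (Real.one_le_rpow (by norm_num) (by norm_num)).trans ha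
  have ha₀ : 0 ≤ a := zero_le_one.trans ha₁
  have h3 : (3 : ℝ) ≤ a ^ 4 := by
    rw [one_div, Real.rpow_inv_le_iff_of_pos (by norm_num) ha₀ (by norm_num)] at ha
    exact_mod_cast ha
  have hlim := repeller_volume_growth_case_large_general (m := 3) (b := 3)
    (ha₁.trans (le_abs_self a)) (by simpa [abs_of_nonneg ha₀] using h3) hg hg0 hL
  exact ((continuous_coe_real_ereal.tendsto 0).comp hlim).limsup_eq
end

section
/- Fix a real number a with 3^{1/5} < a < 3^{1/4}. Then limsup_{n→∞} (1/n) log Lₙ = log 3 − 4 log a. -/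
/-!
The coefficient `cₙ = 3ⁿ a^{-5n}` is at most `1`, so the graph of `gₙ` never leaves the box above
`[0, 1]` and `Lₙ` is the arclength of the whole arc. With `M = aⁿ`, the derivative of
`c uᵏ sin (M / u)` is `-c M uᵏ⁻² cos (M / u)` up to an error bounded by `c k uᵏ⁻¹`, whose integral
is `c`. The integral of `M uᵏ⁻² |cos (M / u)|` is at most `M / (k - 1)`, and at least the integral
of `M uᵏ⁻² cos² (M / u) = M uᵏ⁻² (1 + cos (2 M / u)) / 2`, whose oscillating part stays bounded as
`M → ∞`: it is, up to a bounded error and a constant factor, the derivative of `uᵏ sin (2 M / u)`.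
Hence `Lₙ` is comparable to `max 1 (cₙ M)`, and here `cₙ M = (3 / a⁴)ⁿ`.
-/

open MeasureTheory Set Filter Topology

section Arclength

/-- The length of the part of the graph of `g` lying over `[0, 1]` and inside the square
`[-1, 1]²`. It is meaningful when `g` is differentiable almost everywhere on that set and its length
is finite. -/
noncomputable def boxArclength (g : ℝ → ℝ) : ℝ :=
  ∫ u in {u : ℝ | u ∈ Icc (0 : ℝ) 1 ∧ |g u| ≤ 1}, √(1 + deriv g u ^ 2)

theorem boxArclength_eq_integral {g : ℝ → ℝ} (hg : ∀ u ∈ Icc (0 : ℝ) 1, |g u| ≤ 1) :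
    boxArclength g = ∫ u in (0 : ℝ)..1, √(1 + deriv g u ^ 2) := by
  have hset : {u : ℝ | u ∈ Icc (0 : ℝ) 1 ∧ |g u| ≤ 1} = Icc 0 1 := sep_eq_self_iff_mem_true.2 hg
  rw [boxArclength, hset, integral_Icc_eq_integral_Ioc, intervalIntegral.integral_of_le zero_le_one]

theorem sqrt_one_add_sq_le_of_abs_le_s11 {s t : ℝ} (h : |t| ≤ s) : √(1 + t ^ 2) ≤ 1 + s := by
  simpa only [Real.norm_eq_abs, sq_abs] using
    (sqrt_one_add_norm_sq_le t).trans (add_le_add_right h 1)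

variable {g φ : ℝ → ℝ} {x y : ℝ}

theorem intervalIntegrable_sqrt_one_add_deriv_sq (hxy : x ≤ y)
    (hφ : IntervalIntegrable φ volume x y) (h : ∀ u ∈ Ioo x y, |deriv g u| ≤ φ u) :
    IntervalIntegrable (fun u ↦ √(1 + deriv g u ^ 2)) volume x y := by
  have hmeas : Measurable fun u ↦ √(1 + deriv g u ^ 2) := by
    have := measurable_deriv g
    fun_prop
  rw [intervalIntegrable_iff_integrableOn_Ioo_of_le hxy] at hφ ⊢
  refine ((integrable_const 1).add hφ).mono' hmeas.aestronglyMeasurable ?_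
  filter_upwards [ae_restrict_mem measurableSet_Ioo] with u hu
  rw [Real.norm_of_nonneg (Real.sqrt_nonneg _)]
  exact sqrt_one_add_sq_le_of_abs_le_s11 (h u hu)

theorem integral_sqrt_one_add_deriv_sq_le (hxy : x ≤ y)
    (hφ : IntervalIntegrable φ volume x y) (h : ∀ u ∈ Ioo x y, |deriv g u| ≤ φ u) :
    ∫ u in x..y, √(1 + deriv g u ^ 2) ≤ y - x + ∫ u in x..y, φ u := by
  calc ∫ u in x..y, √(1 + deriv g u ^ 2) ≤ ∫ u in x..y, (1 + φ u) :=
        intervalIntegral.integral_mono_on_of_le_Ioo hxy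
          (intervalIntegrable_sqrt_one_add_deriv_sq hxy hφ h)
          (intervalIntegrable_const.add hφ) fun u hu ↦ sqrt_one_add_sq_le_of_abs_le_s11 (h u hu)
    _ = y - x + ∫ u in x..y, φ u := by
        rw [intervalIntegral.integral_add intervalIntegrable_const hφ, integral_one]

theorem sub_le_integral_sqrt_one_add_deriv_sq (hxy : x ≤ y)
    (hg : IntervalIntegrable (fun u ↦ √(1 + deriv g u ^ 2)) volume x y) :
    y - x ≤ ∫ u in x..y, √(1 + deriv g u ^ 2) := by
  rw [← integral_one]
  exact intervalIntegral.integral_mono_on hxy intervalIntegrable_const hg fun u _ ↦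
    Real.one_le_sqrt.2 (le_add_of_nonneg_right (sq_nonneg _))

theorem integral_le_integral_sqrt_one_add_deriv_sq (hxy : x ≤ y)
    (hg : IntervalIntegrable (fun u ↦ √(1 + deriv g u ^ 2)) volume x y)
    (hφ : IntervalIntegrable φ volume x y) (h : ∀ u ∈ Ioo x y, φ u ≤ |deriv g u|) :
    ∫ u in x..y, φ u ≤ ∫ u in x..y, √(1 + deriv g u ^ 2) :=
  intervalIntegral.integral_mono_on_of_le_Ioo hxy hφ hg fun u hu ↦
    (h u hu).trans (Real.abs_le_sqrt (le_add_of_nonneg_left zero_le_one))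

end Arclength

section Chirp

/-- The oscillating function `u ↦ c uᵏ sin (M / u)`. Its value at `0` is `0`, since `M / 0 = 0`. -/
noncomputable def chirp (c M : ℝ) (k : ℕ) (u : ℝ) : ℝ :=
  c * u ^ k * Real.sin (M / u)

variable {c M : ℝ} {m : ℕ} {u : ℝ}

theorem abs_mul_le_of_abs_le_one {p t : ℝ} (hp : 0 ≤ p) (ht : |t| ≤ 1) : |p * t| ≤ p := by
  rw [abs_mul, abs_of_nonneg hp]
  exact mul_le_of_le_one_right hp ht

theorem chirp_zero (c M : ℝ) (k : ℕ) : chirp c M k 0 = 0 := by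
  simp [chirp]

theorem abs_chirp_le (c M : ℝ) (k : ℕ) (u : ℝ) : |chirp c M k u| ≤ |c * u ^ k| := by
  rw [chirp, abs_mul]
  exact mul_le_of_le_one_right (abs_nonneg _) (Real.abs_sin_le_one _)

theorem hasDerivAt_chirp (c M : ℝ) (m : ℕ) (hu : u ≠ 0) :
    HasDerivAt (chirp c M (m + 2))
      (c * ((m + 2) * u ^ (m + 1) * Real.sin (M / u) - M * u ^ m * Real.cos (M / u))) u := by
  have hdiv : HasDerivAt (fun v : ℝ ↦ M / v) (-M / u ^ 2) u := by
    simpa only [div_eq_mul_inv, mul_neg, neg_mul] using (hasDerivAt_inv hu).const_mul M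
  refine (((hasDerivAt_pow (m + 2) u).const_mul c).mul hdiv.sin).congr_deriv ?_
  push_cast
  field_simp
  ring

theorem continuous_chirp (c M : ℝ) (m : ℕ) : Continuous (chirp c M (m + 2)) := by
  refine continuous_iff_continuousAt.2 fun u ↦ ?_
  obtain rfl | hu := eq_or_ne u 0
  · rw [ContinuousAt, chirp_zero]
    refine squeeze_zero_norm (abs_chirp_le c M (m + 2)) ?_
    simpa using (by fun_prop : Continuous fun u : ℝ ↦ |c * u ^ (m + 2)|).tendsto 0
  · exact (hasDerivAt_chirp c M m hu).continuousAt

theorem abs_deriv_chirp_le (hc : 0 ≤ c) (hM : 0 ≤ M) (hu : 0 < u) :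
    |deriv (chirp c M (m + 2)) u| ≤ c * ((m + 2) * u ^ (m + 1) + M * u ^ m) := by
  rw [(hasDerivAt_chirp c M m hu.ne').deriv, abs_mul, abs_of_nonneg hc]
  refine mul_le_mul_of_nonneg_left ((abs_sub _ _).trans (add_le_add ?_ ?_)) hc
  · exact abs_mul_le_of_abs_le_one (by positivity) (Real.abs_sin_le_one _)
  · exact abs_mul_le_of_abs_le_one (by positivity) (Real.abs_cos_le_one _)

-- The left side is `c (M uᵐ cos² (M / u) - (m + 2) uᵐ⁺¹)` after the double-angle formula, and
-- `cos² ≤ |cos|`.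
theorem le_abs_deriv_chirp (hc : 0 ≤ c) (hM : 0 ≤ M) (hu : 0 < u) :
    c * (M / 2 * u ^ m + 1 / 4 * (2 * M * u ^ m * Real.cos (2 * M / u)) - (m + 2) * u ^ (m + 1)) ≤
      |deriv (chirp c M (m + 2)) u| := by
  rw [(hasDerivAt_chirp c M m hu.ne').deriv, abs_mul, abs_of_nonneg hc]
  refine mul_le_mul_of_nonneg_left ?_ hc
  have hsin : |(m + 2) * u ^ (m + 1) * Real.sin (M / u)| ≤ (m + 2) * u ^ (m + 1) :=
    abs_mul_le_of_abs_le_one (by positivity) (Real.abs_sin_le_one _)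
  have hcos : M * u ^ m * Real.cos (M / u) ^ 2 ≤ |M * u ^ m * Real.cos (M / u)| := by
    rw [abs_mul, abs_of_nonneg (by positivity : 0 ≤ M * u ^ m), ← sq_abs]
    exact mul_le_mul_of_nonneg_left
      (pow_le_of_le_one (abs_nonneg _) (Real.abs_cos_le_one _) two_ne_zero) (by positivity)
  calc M / 2 * u ^ m + 1 / 4 * (2 * M * u ^ m * Real.cos (2 * M / u)) - (m + 2) * u ^ (m + 1)
        = M * u ^ m * Real.cos (M / u) ^ 2 - (m + 2) * u ^ (m + 1) := by
        rw [Real.cos_sq, ← mul_div_assoc]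
        ring
    _ ≤ |M * u ^ m * Real.cos (M / u)| - |(m + 2) * u ^ (m + 1) * Real.sin (M / u)| :=
        sub_le_sub hcos hsin
    _ ≤ |(m + 2) * u ^ (m + 1) * Real.sin (M / u) - M * u ^ m * Real.cos (M / u)| := by
        rw [abs_sub_comm]
        exact abs_sub_abs_le_abs_sub _ _

theorem intervalIntegrable_mul_comp_div {φ f : ℝ → ℝ} {x y C : ℝ}
    (hφ : IntervalIntegrable φ volume x y) (hf : Measurable f) (hC : ∀ v, |f v| ≤ C) (N : ℝ) :
    IntervalIntegrable (fun u ↦ φ u * f (N / u)) volume x y := by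
  rw [intervalIntegrable_iff] at hφ ⊢
  exact hφ.mul_bdd (hf.comp (by fun_prop)).aestronglyMeasurable (ae_of_all _ fun u ↦ hC (N / u))

theorem intervalIntegrable_mul_pow (N : ℝ) (k : ℕ) {x y : ℝ} :
    IntervalIntegrable (fun u ↦ N * u ^ k) volume x y :=
  Continuous.intervalIntegrable (by fun_prop) x y

theorem integral_add_two_mul_pow (m : ℕ) :
    ∫ u in (0 : ℝ)..1, ((m : ℝ) + 2) * u ^ (m + 1) = 1 := by
  rw [intervalIntegral.integral_const_mul, integral_pow, one_pow,
    zero_pow (m + 1).succ_ne_zero]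
  push_cast
  field_simp
  ring

-- The integrand differs from the derivative of `-chirp 1 N (m + 2)` by at most
-- `(m + 2) u ^ (m + 1)`, whose integral is `1`.
theorem abs_integral_mul_pow_mul_cos_div_le (N : ℝ) (m : ℕ) :
    |∫ u in (0 : ℝ)..1, N * u ^ m * Real.cos (N / u)| ≤ 2 := by
  have hsin : IntervalIntegrable (fun u : ℝ ↦ (m + 2) * u ^ (m + 1) * Real.sin (N / u))
      volume 0 1 :=
    intervalIntegrable_mul_comp_div (intervalIntegrable_mul_pow _ _)
      Real.measurable_sin Real.abs_sin_le_one N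
  have hcos : IntervalIntegrable (fun u : ℝ ↦ N * u ^ m * Real.cos (N / u)) volume 0 1 :=
    intervalIntegrable_mul_comp_div (intervalIntegrable_mul_pow _ _)
      Real.measurable_cos Real.abs_cos_le_one N
  have hftc : (∫ u in (0 : ℝ)..1, (m + 2) * u ^ (m + 1) * Real.sin (N / u)) -
      ∫ u in (0 : ℝ)..1, N * u ^ m * Real.cos (N / u) = Real.sin N := by
    rw [← intervalIntegral.integral_sub hsin hcos,
      intervalIntegral.integral_eq_sub_of_hasDerivAt_of_le zero_le_one
        (continuous_chirp 1 N m).continuousOn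
        (fun u hu ↦ (hasDerivAt_chirp 1 N m hu.1.ne').congr_deriv (one_mul _)) (hsin.sub hcos)]
    simp [chirp]
  have herror : |∫ u in (0 : ℝ)..1, (m + 2) * u ^ (m + 1) * Real.sin (N / u)| ≤ 1 := by
    rw [← Real.norm_eq_abs]
    refine (intervalIntegral.norm_integral_le_of_norm_le zero_le_one (ae_of_all _ fun u hu ↦ ?_)
      (intervalIntegrable_mul_pow _ _)).trans_eq (integral_add_two_mul_pow m)
    have hu₀ : 0 < u := hu.1
    exact abs_mul_le_of_abs_le_one (by positivity) (Real.abs_sin_le_one _)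
  obtain ⟨hneg, hpos⟩ := abs_le.1 herror
  exact abs_le.2 ⟨by linarith [Real.sin_le_one N], by linarith [Real.neg_one_le_sin N]⟩

theorem boxArclength_chirp (hc₀ : 0 ≤ c) (hc₁ : c ≤ 1) (M : ℝ) (k : ℕ) :
    boxArclength (chirp c M k) = ∫ u in (0 : ℝ)..1, √(1 + deriv (chirp c M k) u ^ 2) := by
  refine boxArclength_eq_integral fun u hu ↦ (abs_chirp_le c M k u).trans ?_
  rw [abs_of_nonneg (mul_nonneg hc₀ (pow_nonneg hu.1 k))]
  exact mul_le_one₀ hc₁ (pow_nonneg hu.1 k) (pow_le_one₀ hu.1 hu.2)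

theorem intervalIntegrable_deriv_chirp_majorant (c M : ℝ) (m : ℕ) :
    IntervalIntegrable (fun u ↦ c * ((m + 2) * u ^ (m + 1) + M * u ^ m)) volume 0 1 :=
  ((intervalIntegrable_mul_pow _ _).add (intervalIntegrable_mul_pow _ _)).const_mul c

theorem intervalIntegrable_sqrt_one_add_deriv_chirp_sq (hc : 0 ≤ c) (hM : 0 ≤ M) :
    IntervalIntegrable (fun u ↦ √(1 + deriv (chirp c M (m + 2)) u ^ 2)) volume 0 1 :=
  intervalIntegrable_sqrt_one_add_deriv_sq zero_le_one
    (intervalIntegrable_deriv_chirp_majorant c M m) fun _ hu ↦ abs_deriv_chirp_le hc hM hu.1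

theorem boxArclength_chirp_le (hc₀ : 0 ≤ c) (hc₁ : c ≤ 1) (hM : 0 ≤ M) :
    boxArclength (chirp c M (m + 2)) ≤ 3 * max 1 (c * M) := by
  have hbound := integral_sqrt_one_add_deriv_sq_le zero_le_one
    (intervalIntegrable_deriv_chirp_majorant c M m) fun u hu ↦ abs_deriv_chirp_le hc₀ hM hu.1
  have hmain : ∫ u in (0 : ℝ)..1, M * u ^ m ≤ M := by
    rw [intervalIntegral.integral_const_mul, integral_pow]
    refine mul_le_of_le_one_right hM ?_
    simpa using inv_le_one_of_one_le₀ (by simp : (1 : ℝ) ≤ m + 1)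
  rw [← boxArclength_chirp hc₀ hc₁, intervalIntegral.integral_const_mul,
    intervalIntegral.integral_add (intervalIntegrable_mul_pow _ _)
      (intervalIntegrable_mul_pow _ _), integral_add_two_mul_pow] at hbound
  linarith [mul_le_mul_of_nonneg_left hmain hc₀, le_max_left 1 (c * M), le_max_right 1 (c * M)]

theorem one_le_boxArclength_chirp (hc₀ : 0 ≤ c) (hc₁ : c ≤ 1) (hM : 0 ≤ M) :
    1 ≤ boxArclength (chirp c M (m + 2)) := by
  rw [boxArclength_chirp hc₀ hc₁]
  simpa only [sub_zero] using sub_le_integral_sqrt_one_add_deriv_sq zero_le_one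
    (intervalIntegrable_sqrt_one_add_deriv_chirp_sq hc₀ hM)

theorem mul_sub_le_boxArclength_chirp (hc₀ : 0 ≤ c) (hc₁ : c ≤ 1) (hM : 0 ≤ M) :
    c * (M / (2 * (m + 1)) - 3 / 2) ≤ boxArclength (chirp c M (m + 2)) := by
  have hpow : IntervalIntegrable (fun u ↦ M / 2 * u ^ m) volume 0 1 :=
    intervalIntegrable_mul_pow _ _
  have hcos : IntervalIntegrable
      (fun u : ℝ ↦ 1 / 4 * (2 * M * u ^ m * Real.cos (2 * M / u))) volume 0 1 :=
    (intervalIntegrable_mul_comp_div (intervalIntegrable_mul_pow (2 * M) m)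
      Real.measurable_cos Real.abs_cos_le_one (2 * M)).const_mul _
  have herror : IntervalIntegrable (fun u ↦ ((m : ℝ) + 2) * u ^ (m + 1)) volume 0 1 :=
    intervalIntegrable_mul_pow _ _
  have hlower := integral_le_integral_sqrt_one_add_deriv_sq zero_le_one
    (intervalIntegrable_sqrt_one_add_deriv_chirp_sq hc₀ hM)
    (((hpow.add hcos).sub herror).const_mul c) fun u hu ↦ le_abs_deriv_chirp hc₀ hM hu.1
  rw [← boxArclength_chirp hc₀ hc₁, intervalIntegral.integral_const_mul,
    intervalIntegral.integral_sub (hpow.add hcos) herror, integral_add_two_mul_pow,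
    intervalIntegral.integral_add hpow hcos, intervalIntegral.integral_const_mul,
    intervalIntegral.integral_const_mul] at hlower
  refine (mul_le_mul_of_nonneg_left ?_ hc₀).trans hlower
  have hmain : M / 2 * ∫ u in (0 : ℝ)..1, u ^ m = M / (2 * (m + 1)) := by
    rw [integral_pow, one_pow, zero_pow m.succ_ne_zero]
    field_simp
    ring
  linarith [(abs_le.1 (abs_integral_mul_pow_mul_cos_div_le (2 * M) m)).1]

theorem max_one_le_boxArclength_chirp (hc₀ : 0 ≤ c) (hc₁ : c ≤ 1) (hM : 0 ≤ M) :
    max 1 (c * M) ≤ 5 * (m + 1) * boxArclength (chirp c M (m + 2)) := by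
  have hone := one_le_boxArclength_chirp (m := m) hc₀ hc₁ hM
  have hosc := mul_sub_le_boxArclength_chirp (m := m) hc₀ hc₁ hM
  refine max_le ?_ ?_
  · nlinarith [(Nat.cast_nonneg m : (0 : ℝ) ≤ m)]
  · have hquot : c * M / (m + 1) ≤ 5 * boxArclength (chirp c M (m + 2)) := by
      have hsplit : c * M / (m + 1) = 2 * (c * (M / (2 * (m + 1)) - 3 / 2)) + 3 * c := by
        field_simp
        ring
      linarith
    rw [div_le_iff₀ (by positivity)] at hquot
    linarith

end Chirp

section ExponentialGrowth

theorem tendsto_inv_mul_log_of_le_of_le {L : ℕ → ℝ} {r A B : ℝ} (hr : 0 < r) (hA : 0 < A)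
    (hlower : ∀ n, A * r ^ n ≤ L n) (hupper : ∀ n, L n ≤ B * r ^ n) :
    Tendsto (fun n : ℕ ↦ 1 / (n : ℝ) * Real.log (L n)) atTop (𝓝 (Real.log r)) := by
  have hB : 0 < B := hA.trans_le (by simpa using (hlower 0).trans (hupper 0))
  have hL : ∀ n, 0 < L n := fun n ↦ (by positivity : 0 < A * r ^ n).trans_le (hlower n)
  have hlim (C : ℝ) : Tendsto (fun n : ℕ ↦ Real.log C / n + Real.log r) atTop (𝓝 (Real.log r)) := by
    simpa using (tendsto_const_div_atTop_nhds_zero_nat (Real.log C)).add_const (Real.log r)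
  have hlog {C : ℝ} (hC : 0 < C) {n : ℕ} (hn : 0 < n) :
      1 / (n : ℝ) * Real.log (C * r ^ n) = Real.log C / n + Real.log r := by
    rw [Real.log_mul hC.ne' (by positivity), Real.log_pow]
    field_simp
  refine tendsto_of_tendsto_of_tendsto_of_le_of_le' (hlim A) (hlim B) ?_ ?_ <;>
    filter_upwards [eventually_gt_atTop 0] with n hn
  · rw [← hlog hA hn]
    gcongr
    exact hlower n
  · rw [← hlog hB hn]
    gcongr
    · exact hL n
    · exact hupper n

theorem max_one_pow {β : ℝ} (hβ : 0 ≤ β) (n : ℕ) : max 1 (β ^ n) = max 1 β ^ n := by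
  obtain h | h := le_total 1 β
  · rw [max_eq_right h, max_eq_right (one_le_pow₀ h)]
  · rw [max_eq_left h, max_eq_left (pow_le_one₀ hβ h), one_pow]

theorem tendsto_inv_mul_log_boxArclength_chirp {c M : ℕ → ℝ} {β : ℝ} (m : ℕ) (hβ : 0 ≤ β)
    (hc₀ : ∀ n, 0 ≤ c n) (hc₁ : ∀ n, c n ≤ 1) (hM : ∀ n, 0 ≤ M n)
    (hcM : ∀ n, c n * M n = β ^ n) :
    Tendsto (fun n : ℕ ↦ 1 / (n : ℝ) * Real.log (boxArclength (chirp (c n) (M n) (m + 2)))) atTop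
      (𝓝 (Real.posLog β)) := by
  have hmax (n : ℕ) : max 1 (c n * M n) = max 1 β ^ n := by rw [hcM, max_one_pow hβ]
  rw [Real.posLog_eq_log_max_one hβ]
  refine tendsto_inv_mul_log_of_le_of_le (A := (5 * (m + 1))⁻¹) (B := 3) (by positivity)
    (by positivity) (fun n ↦ ?_) fun n ↦ ?_
  · rw [← hmax, inv_mul_le_iff₀ (by positivity)]
    exact max_one_le_boxArclength_chirp (hc₀ n) (hc₁ n) (hM n)
  · rw [← hmax]
    exact boxArclength_chirp_le (hc₀ n) (hc₁ n) (hM n)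

end ExponentialGrowth

theorem repeller_volume_growth_case_middle_general {a b : ℝ} {k : ℕ} (ha : 0 < a) (hb : 0 < b)
    (hk : 2 ≤ k) (hba : b ≤ a ^ k)
    (g : ℕ → ℝ → ℝ)
    (hg : ∀ (n : ℕ) (u : ℝ), u ≠ 0 →
      g n u = b ^ n * (a ^ (k * n))⁻¹ * u ^ k * Real.sin (a ^ n / u))
    (hg0 : ∀ n : ℕ, g n 0 = 0)
    (L : ℕ → ℝ)
    (hL : ∀ n : ℕ, L n =
      ∫ u in {u : ℝ | u ∈ Set.Icc (0 : ℝ) 1 ∧ |g n u| ≤ 1},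
        Real.sqrt (1 + (deriv (g n) u) ^ 2)) :
    Tendsto (fun n : ℕ ↦ 1 / (n : ℝ) * Real.log (L n)) atTop
      (𝓝 (max 0 (Real.log b - (k - 1) * Real.log a))) := by
  obtain ⟨m, rfl⟩ := Nat.exists_eq_add_of_le' hk
  have hgc (n : ℕ) : g n = chirp (b ^ n * (a ^ ((m + 2) * n))⁻¹) (a ^ n) (m + 2) := by
    ext u
    obtain rfl | hu := eq_or_ne u 0
    · rw [hg0, chirp_zero]
    · exact hg n u hu
  have hcoeff (n : ℕ) : b ^ n * (a ^ ((m + 2) * n))⁻¹ ≤ 1 := by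
    rw [pow_mul, ← div_eq_mul_inv, ← div_pow]
    exact pow_le_one₀ (by positivity) ((div_le_one (by positivity)).2 hba)
  have hfreq (n : ℕ) : b ^ n * (a ^ ((m + 2) * n))⁻¹ * a ^ n = (b / a ^ (m + 1)) ^ n := by
    rw [div_pow]
    field_simp
    ring
  have hlog : Real.posLog (b / a ^ (m + 1)) =
      max 0 (Real.log b - ((m + 2 : ℕ) - 1) * Real.log a) := by
    rw [Real.posLog_apply, Real.log_div hb.ne' (by positivity), Real.log_pow]
    push_cast
    ring_nf
  have hlim := tendsto_inv_mul_log_boxArclength_chirp m (by positivity) (fun n ↦ by positivity)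
    hcoeff (fun n ↦ by positivity) hfreq
  simpa only [hL, hgc, boxArclength, hlog] using hlim

/-- Case `3^{1/5} < a < 3^{1/4}` of the example: with
`gₙ(u) = 3ⁿ a^{-5n} u⁵ sin(aⁿ/u)` (and `gₙ(0) = 0`),
`Iₙ = {u ∈ [0,1] : |gₙ(u)| ≤ 1}` and
`Lₙ = ∫_{Iₙ} √(1 + gₙ'(u)²) du`, one has
`limsup (1/n) log Lₙ = log 3 - 4 log a`. -/
theorem repeller_volume_growth_case_middle (a : ℝ)
    (ha1 : (3 : ℝ) ^ ((1 : ℝ) / 5) < a) (ha2 : a < (3 : ℝ) ^ ((1 : ℝ) / 4))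
    (g : ℕ → ℝ → ℝ)
    (hg : ∀ (n : ℕ) (u : ℝ), u ≠ 0 →
      g n u = 3 ^ n * (a ^ (5 * n))⁻¹ * u ^ 5 * Real.sin (a ^ n / u))
    (hg0 : ∀ n : ℕ, g n 0 = 0)
    (L : ℕ → ℝ)
    (hL : ∀ n : ℕ, L n =
      ∫ u in {u : ℝ | u ∈ Set.Icc (0 : ℝ) 1 ∧ |g n u| ≤ 1},
        Real.sqrt (1 + (deriv (g n) u) ^ 2)) :
    Filter.limsup (fun n : ℕ =>
        (((1 / (n : ℝ)) * Real.log (L n) : ℝ) : EReal)) Filter.atTop =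
      ((Real.log 3 - 4 * Real.log a : ℝ) : EReal) := by
  have ha : 0 < a := ha1.trans' (by positivity)
  have hlog : 0 ≤ Real.log 3 - 4 * Real.log a := by
    linarith [(Real.log_lt_log ha ha2).trans_eq (Real.log_rpow three_pos _)]
  have h3 : 3 ≤ a ^ 5 := by
    rw [one_div, Real.rpow_inv_lt_iff_of_pos (by positivity) ha.le (by positivity)] at ha1
    exact_mod_cast ha1.le
  have hlim := repeller_volume_growth_case_middle_general ha three_pos (by norm_num) h3
    g hg hg0 L hL
  have hexp : ((5 : ℕ) : ℝ) - 1 = 4 := by norm_num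
  rw [hexp, max_eq_right hlog] at hlim
  exact ((continuous_coe_real_ereal.tendsto _).comp hlim).limsup_eq
end

section
/- Fix a real number a with 1 < a ≤ 3^{1/5}. Then limsup_{n→∞} (1/n) log Lₙ = (1/5) log 3. -/
/-!
Write `A = aⁿ` and `r = 3^{n/5} / aⁿ`, so that `gₙ(u) = (ru)⁵ sin(A/u)`. The hypothesis on `a` says
`r ≥ 1`, and the claim is that the arclength in the strip `|gₙ| ≤ 1` is comparable to
`A * r = 3^{n/5}`. Up to an error of order `r ≤ A * r`, only the oscillating part
`(ru)⁵ (A/u²) |cos(A/u)|` of `|gₙ'|` matters. On `ru ≤ 1` it is at most `A * r²`, and on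
`1/2 < ru ≤ 1`, an interval contained in the strip, it is at least `2⁻⁵ (A/u²) cos²(A/u)`, whose
integral is of order `A * r`. On `ru > 1` there are about `A * r / π` half periods of `sin(A/u)`; on
each of them `(ru)⁵` varies at most by the factor `3⁵`, so that the part of the half period inside
the strip contributes at most `3⁵` times the length of `[-1, 1]`.
-/

open MeasureTheory Set Filter Topology Real

theorem tendsto_one_div_mul_log_of_pow_bounds {L : ℕ → ℝ} {ρ c C : ℝ} (hρ : 0 < ρ) (hc : 0 < c)
    (hlower : ∀ᶠ n : ℕ in atTop, c * ρ ^ n ≤ L n)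
    (hupper : ∀ᶠ n : ℕ in atTop, L n ≤ C * ρ ^ n) :
    Tendsto (fun n : ℕ => 1 / (n : ℝ) * log (L n)) atTop (𝓝 (log ρ)) := by
  have hlim (K : ℝ) : Tendsto (fun n : ℕ => log ρ + K / (n : ℝ)) atTop (𝓝 (log ρ)) := by
    simpa using tendsto_const_nhds.add (tendsto_const_div_atTop_nhds_zero_nat K)
  have hsplit : ∀ᶠ n : ℕ in atTop,
      1 / (n : ℝ) * log (L n) = log ρ + log (L n / ρ ^ n) / (n : ℝ) := by
    filter_upwards [hlower, eventually_gt_atTop 0] with n hn hn0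
    have hL : 0 < L n := lt_of_lt_of_le (by positivity) hn
    rw [log_div hL.ne' (by positivity), log_pow]
    field_simp
    ring
  refine tendsto_of_tendsto_of_tendsto_of_le_of_le' (hlim (log c)) (hlim (log C)) ?_ ?_
  · filter_upwards [hlower, hsplit] with n hn hs
    rw [hs]
    gcongr
    rwa [le_div_iff₀ (by positivity)]
  · filter_upwards [hlower, hupper, hsplit] with n hn hn' hs
    have hL : 0 < L n := lt_of_lt_of_le (by positivity) hn
    rw [hs]
    gcongr
    rwa [div_le_iff₀ (by positivity)]

theorem integrableOn_abs_deriv_of_mapsTo_Icc {f f' : ℝ → ℝ} {s : Set ℝ} {c d : ℝ}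
    (hs : MeasurableSet s) (hf' : ∀ u ∈ s, HasDerivAt f (f' u) u) (hf : InjOn f s)
    (hmaps : MapsTo f s (Icc c d)) : IntegrableOn (fun u => |f' u|) s := by
  have himage : IntegrableOn (fun _ => (1 : ℝ)) (f '' s) :=
    (integrableOn_const measure_Icc_lt_top.ne).mono_set hmaps.image_subset
  simpa using (integrableOn_image_iff_integrableOn_abs_deriv_smul hs
    (fun u hu => (hf' u hu).hasDerivWithinAt) hf _).1 himage

theorem setIntegral_abs_deriv_le_of_mapsTo_Icc {f f' : ℝ → ℝ} {s : Set ℝ} {c d : ℝ} (hcd : c ≤ d)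
    (hs : MeasurableSet s) (hf' : ∀ u ∈ s, HasDerivAt f (f' u) u) (hf : InjOn f s)
    (hmaps : MapsTo f s (Icc c d)) : ∫ u in s, |f' u| ≤ d - c := by
  have himage : volume.real (f '' s) = ∫ u in s, |f' u| := by
    simpa using integral_image_eq_integral_abs_deriv_smul hs
      (fun u hu => (hf' u hu).hasDerivWithinAt) hf (fun _ => (1 : ℝ))
  rw [← himage, ← volume_real_Icc_of_le hcd]
  exact measureReal_mono hmaps.image_subset measure_Icc_lt_top.ne

theorem intervalIntegral_le_mul_of_forall_le {μ : Measure ℝ} {f : ℝ → ℝ} {b : ℕ → ℝ} {C : ℝ}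
    (hf : ∀ k, IntervalIntegrable f μ (b k) (b (k + 1)))
    (hC : ∀ k, ∫ u in b (k + 1)..b k, f u ∂μ ≤ C) (N : ℕ) :
    ∫ u in b N..b 0, f u ∂μ ≤ N * C := by
  rw [intervalIntegral.integral_symm,
    ← intervalIntegral.sum_integral_adjacent_intervals fun k _ => hf k, ← Finset.sum_neg_distrib]
  simp only [← intervalIntegral.integral_symm]
  simpa using Finset.sum_le_card_nsmul (Finset.range N) _ C fun k _ => hC k

theorem intervalIntegral_restrict_eq_setIntegral_inter {μ : Measure ℝ} {f : ℝ → ℝ} {s : Set ℝ}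
    {a b : ℝ} (hab : a ≤ b) :
    ∫ u in a..b, f u ∂μ.restrict s = ∫ u in Ioc a b ∩ s, f u ∂μ := by
  rw [intervalIntegral.integral_of_le hab, Measure.restrict_restrict measurableSet_Ioc]

theorem hasDerivAt_const_div (A : ℝ) {u : ℝ} (hu : u ≠ 0) :
    HasDerivAt (fun v : ℝ => A / v) (-(A / u ^ 2)) u := by
  simpa [div_eq_mul_inv] using (hasDerivAt_inv hu).const_mul A

theorem integral_div_sq_mul_comp_const_div {A α β : ℝ} {φ : ℝ → ℝ} (hφ : Continuous φ)
    (hα : 0 < α) (hαβ : α ≤ β) :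
    ∫ u in α..β, A / u ^ 2 * φ (A / u) = ∫ x in A / β..A / α, φ x := by
  have hne : ∀ u ∈ uIcc α β, u ≠ 0 := fun u hu =>
    (hα.trans_le (uIcc_of_le hαβ ▸ hu : u ∈ Icc α β).1).ne'
  have hsubst := intervalIntegral.integral_comp_mul_deriv
    (fun u hu => hasDerivAt_const_div A (hne u hu))
    (continuousOn_const.div (continuousOn_id.pow 2) fun u hu => pow_ne_zero 2 (hne u hu)).neg hφ
  rw [intervalIntegral.integral_symm (A / α), ← hsubst, ← intervalIntegral.integral_neg]
  simp [mul_comm]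

theorem sub_one_div_two_le_integral_cos_sq (x y : ℝ) :
    (y - x - 1) / 2 ≤ ∫ t in x..y, cos t ^ 2 := by
  rw [integral_cos_sq]
  nlinarith [sq_nonneg (cos x - sin x), sq_nonneg (cos y + sin y), sin_sq_add_cos_sq x,
    sin_sq_add_cos_sq y]

/-- The function `u ↦ (ru)ᵖ sin(A/u)`, the image of the curve `(x, xᵖ sin(1/x))` under the linear
map `diag(A, (A * r)ᵖ)`. -/
noncomputable def dampedSine (p : ℕ) (A r u : ℝ) : ℝ := (r * u) ^ p * sin (A / u)

/-- The parameters in `(0, 1]` at which the graph of `dampedSine p A r` lies in the square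
`[-1, 1]²`. -/
def dampedSineStrip (p : ℕ) (A r : ℝ) : Set ℝ := {u | u ∈ Ioc 0 1 ∧ |dampedSine p A r u| ≤ 1}

/-- The arclength of the part of the graph of `dampedSine p A r` over `dampedSineStrip p A r`. -/
noncomputable def dampedSineLength (p : ℕ) (A r : ℝ) : ℝ :=
  ∫ u in dampedSineStrip p A r, √(1 + deriv (dampedSine p A r) u ^ 2)

/-- The part of `|deriv (dampedSine p A r) u|` that comes from differentiating the sine. -/
noncomputable def dampedSineOscillation (p : ℕ) (A r u : ℝ) : ℝ :=
  (r * u) ^ p * (A / u ^ 2) * |cos (A / u)|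

/-- For `A > 0`, the zeros of `u ↦ cos(A/u)` on `u > 0` in decreasing order; consecutive ones bound
the half periods of `u ↦ sin(A/u)`. -/
noncomputable def cosineNode (A : ℝ) (k : ℕ) : ℝ := A / (k * π + π / 2)

section CosineNode

variable {A : ℝ}

theorem cosineNode_pos (hA : 0 < A) (k : ℕ) : 0 < cosineNode A k := by
  unfold cosineNode
  positivity

theorem antitone_cosineNode (hA : 0 < A) : Antitone (cosineNode A) := fun k l hkl => by
  unfold cosineNode
  gcongr

theorem cosineNode_le_three_mul_succ (hA : 0 < A) (k : ℕ) :
    cosineNode A k ≤ 3 * cosineNode A (k + 1) := by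
  unfold cosineNode
  rw [← mul_div_assoc, div_le_div_iff₀ (by positivity) (by positivity)]
  have hkπ : 0 ≤ A * (k * π) := by positivity
  push_cast
  linarith

theorem one_le_cosineNode_zero (hA : π / 2 ≤ A) : 1 ≤ cosineNode A 0 := by
  simpa [cosineNode, one_le_div pi_div_two_pos] using hA

theorem cosineNode_le_one_div {r : ℝ} {N : ℕ} (hr : 0 < r) (hN : A * r ≤ N * π) :
    cosineNode A N ≤ 1 / r := by
  rw [cosineNode, div_le_div_iff₀ (by positivity) hr]
  linarith [pi_pos]

theorem injOn_sin_const_div (hA : 0 < A) (k : ℕ) :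
    InjOn (fun u => sin (A / u)) (Ioc (cosineNode A (k + 1)) (cosineNode A k)) := by
  have hphase : ∀ u ∈ Ioc (cosineNode A (k + 1)) (cosineNode A k),
      A / u - (k + 1 : ℕ) * π ∈ Icc (-(π / 2)) (π / 2) := by
    rintro u ⟨hlt, hle⟩
    have hu : 0 < u := (cosineNode_pos hA _).trans hlt
    rw [cosineNode, div_lt_comm₀ (by positivity) hu] at hlt
    rw [cosineNode, le_div_comm₀ hu (by positivity)] at hle
    push_cast at hlt ⊢
    constructor <;> linarith
  intro u hu v hv huv
  have hshift := injOn_sin (hphase u hu) (hphase v hv) <| by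
    simpa only [sin_sub_nat_mul_pi] using congrArg ((-1) ^ (k + 1) * ·) huv
  simpa [div_eq_mul_inv, hA.ne'] using hshift

end CosineNode

section DampedSine

variable {p : ℕ} {A r u : ℝ}

theorem hasDerivAt_dampedSine (hu : u ≠ 0) :
    HasDerivAt (dampedSine p A r)
      (p / u * dampedSine p A r u - (r * u) ^ p * (A / u ^ 2) * cos (A / u)) u := by
  have hpow : HasDerivAt (fun v => (r * v) ^ p) (p / u * (r * u) ^ p) u := by
    refine (((hasDerivAt_id u).const_mul r).pow p).congr_deriv ?_
    rcases p with - | p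
    · simp
    · simp only [id, Nat.add_sub_cancel]
      field_simp
      ring
  refine (hpow.mul (hasDerivAt_const_div A hu).sin).congr_deriv ?_
  unfold dampedSine
  ring

theorem measurableSet_dampedSineStrip : MeasurableSet (dampedSineStrip p A r) := by
  have hf : Measurable fun u => |dampedSine p A r u| := by
    unfold dampedSine
    fun_prop
  exact measurableSet_Ioc.inter (measurableSet_le hf measurable_const)

theorem dampedSineStrip_subset : dampedSineStrip p A r ⊆ Ioc 0 1 := fun _ hu => hu.1

theorem Ioc_subset_dampedSineStrip (hr : 1 ≤ r) : Ioc 0 (1 / r) ⊆ dampedSineStrip p A r := by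
  rintro u ⟨hu, hur⟩
  refine ⟨⟨hu, hur.trans ((div_le_one (by positivity)).2 hr)⟩, ?_⟩
  rw [le_div_iff₀' (by positivity)] at hur
  rw [dampedSine, abs_mul, abs_of_nonneg (by positivity)]
  exact mul_le_one₀ (pow_le_one₀ (by positivity) hur) (abs_nonneg _) (abs_sin_le_one _)

theorem abs_dampedSine_le_mul (hp : p ≠ 0) (hr : 0 < r) (hu : u ∈ dampedSineStrip p A r) :
    |dampedSine p A r u| ≤ r * u := by
  have hru : 0 < r * u := mul_pos hr hu.1.1
  rcases le_total (r * u) 1 with h | h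
  · rw [dampedSine, abs_mul, abs_of_nonneg (by positivity)]
    exact (mul_le_of_le_one_right (by positivity) (abs_sin_le_one _)).trans
      (pow_le_of_le_one hru.le h hp)
  · exact hu.2.trans h

theorem dampedSineOscillation_nonneg (hA : 0 < A) (hr : 0 < r) (hu : 0 ≤ u) :
    0 ≤ dampedSineOscillation p A r u := by
  unfold dampedSineOscillation
  positivity

theorem abs_abs_deriv_dampedSine_sub_le (hp : p ≠ 0) (hA : 0 < A) (hr : 0 < r)
    (hu : u ∈ dampedSineStrip p A r) :
    |(|deriv (dampedSine p A r) u| - dampedSineOscillation p A r u)| ≤ p * r := by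
  have hu0 : 0 < u := hu.1.1
  have hosc : dampedSineOscillation p A r u = |-((r * u) ^ p * (A / u ^ 2) * cos (A / u))| := by
    rw [abs_neg, abs_mul, abs_of_nonneg (by positivity), dampedSineOscillation]
  rw [(hasDerivAt_dampedSine hu0.ne').deriv, hosc]
  refine (abs_abs_sub_abs_le_abs_sub _ _).trans ?_
  calc |p / u * dampedSine p A r u - (r * u) ^ p * (A / u ^ 2) * cos (A / u)
        - -((r * u) ^ p * (A / u ^ 2) * cos (A / u))|
      = p / u * |dampedSine p A r u| := by
        rw [sub_neg_eq_add, sub_add_cancel, abs_mul, abs_of_nonneg (by positivity)]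
    _ ≤ p / u * (r * u) := by
        gcongr
        exact abs_dampedSine_le_mul hp hr hu
    _ = p * r := by field_simp

theorem dampedSineOscillation_le {c : ℝ} (hp : 2 ≤ p) (hA : 0 < A) (hr : 0 < r)
    (hu : u ∈ Ioc 0 c) :
    dampedSineOscillation p A r u ≤ A * r ^ 2 * (r * c) ^ (p - 2) := by
  obtain ⟨q, rfl⟩ := Nat.exists_eq_add_of_le hp
  obtain ⟨hu0, huc⟩ := hu
  calc dampedSineOscillation (2 + q) A r u
      ≤ (r * u) ^ (2 + q) * (A / u ^ 2) :=
        mul_le_of_le_one_right (by positivity) (abs_cos_le_one _)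
    _ = A * r ^ 2 * (r * u) ^ q := by field_simp; ring
    _ ≤ A * r ^ 2 * (r * c) ^ (2 + q - 2) := by
        rw [Nat.add_sub_cancel_left]
        gcongr

theorem integrableOn_dampedSineOscillation (hp : 2 ≤ p) (hA : 0 < A) (hr : 0 < r) :
    IntegrableOn (dampedSineOscillation p A r) (dampedSineStrip p A r) := by
  have hmeas : Measurable (dampedSineOscillation p A r) := by
    unfold dampedSineOscillation
    fun_prop
  refine IntegrableOn.mono_set (t := Ioc 0 1) ?_ dampedSineStrip_subset
  refine Measure.integrableOn_of_bounded (M := A * r ^ 2 * (r * 1) ^ (p - 2)) (by simp)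
    hmeas.aestronglyMeasurable ((ae_restrict_iff' measurableSet_Ioc).2 (ae_of_all _ fun u hu => ?_))
  rw [norm_of_nonneg (dampedSineOscillation_nonneg hA hr hu.1.le)]
  exact dampedSineOscillation_le hp hA hr hu

theorem integrableOn_const_dampedSineStrip (c : ℝ) :
    IntegrableOn (fun _ => c) (dampedSineStrip p A r) :=
  (integrableOn_const (by simp)).mono_set dampedSineStrip_subset

theorem sqrt_one_add_deriv_dampedSine_sq_le (hp : p ≠ 0) (hA : 0 < A) (hr : 0 < r)
    (hu : u ∈ dampedSineStrip p A r) :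
    √(1 + deriv (dampedSine p A r) u ^ 2) ≤ 1 + p * r + dampedSineOscillation p A r u := by
  have hsqrt : √(1 + deriv (dampedSine p A r) u ^ 2) ≤ 1 + |deriv (dampedSine p A r) u| := by
    simpa using sqrt_one_add_norm_sq_le (deriv (dampedSine p A r) u)
  linarith [(abs_le.1 (abs_abs_deriv_dampedSine_sub_le hp hA hr hu)).2]

theorem integrableOn_sqrt_one_add_deriv_dampedSine_sq (hp : 2 ≤ p) (hA : 0 < A) (hr : 0 < r) :
    IntegrableOn (fun u => √(1 + deriv (dampedSine p A r) u ^ 2)) (dampedSineStrip p A r) := by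
  refine Integrable.mono' ((integrableOn_const_dampedSineStrip (1 + p * r)).add
    (integrableOn_dampedSineOscillation hp hA hr)) (by fun_prop)
    ((ae_restrict_iff' measurableSet_dampedSineStrip).2 (ae_of_all _ fun u hu => ?_))
  rw [norm_of_nonneg (sqrt_nonneg _)]
  exact sqrt_one_add_deriv_dampedSine_sq_le (by omega) hA hr hu

theorem setIntegral_dampedSineOscillation_le_of_injOn {α β c : ℝ} (hp : 2 ≤ p) (hA : 0 < A)
    (hr : 0 < r) (hα : 0 < α) (hc : 0 ≤ c) (hβ : β ≤ c * α)
    (hinj : InjOn (fun u => sin (A / u)) (Ioc α β)) :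
    ∫ u in Ioc α β ∩ dampedSineStrip p A r, dampedSineOscillation p A r u ≤ 2 * c ^ p := by
  set s := Ioc α β ∩ dampedSineStrip p A r
  have hsm : MeasurableSet s := measurableSet_Ioc.inter measurableSet_dampedSineStrip
  -- Freezing the amplitude at `α` makes the function injective and only decreases `|·|`.
  let h : ℝ → ℝ := fun u => (r * α) ^ p * sin (A / u)
  let h' : ℝ → ℝ := fun u => (r * α) ^ p * (cos (A / u) * -(A / u ^ 2))
  have hderiv : ∀ u ∈ s, HasDerivAt h (h' u) u := fun u hu =>
    (hasDerivAt_const_div A hu.2.1.1.ne').sin.const_mul _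
  have hmaps : MapsTo h s (Icc (-1) 1) := by
    rintro u ⟨⟨hαu, -⟩, -, hstrip⟩
    refine abs_le.1 (le_trans ?_ hstrip)
    simp only [h, dampedSine, abs_mul, abs_pow]
    gcongr
  have hinj_h : InjOn h s := fun u hu v hv huv =>
    hinj hu.1 hv.1 (mul_left_cancel₀ (by positivity) huv)
  have hcompare : ∀ u ∈ s, dampedSineOscillation p A r u ≤ c ^ p * |h' u| := by
    rintro u ⟨⟨-, hle⟩, ⟨hu0, -⟩, -⟩
    calc dampedSineOscillation p A r u
        ≤ (r * (c * α)) ^ p * (A / u ^ 2) * |cos (A / u)| := by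
          unfold dampedSineOscillation
          gcongr
          exact hle.trans hβ
      _ = c ^ p * |h' u| := by
          simp only [h', abs_mul, abs_neg, abs_of_pos (show 0 < (r * α) ^ p by positivity),
            abs_of_pos (show 0 < A / u ^ 2 by positivity)]
          ring
  calc ∫ u in s, dampedSineOscillation p A r u
      ≤ ∫ u in s, c ^ p * |h' u| :=
        setIntegral_mono_on ((integrableOn_dampedSineOscillation hp hA hr).mono_set
          inter_subset_right)
          ((integrableOn_abs_deriv_of_mapsTo_Icc hsm hderiv hinj_h hmaps).const_mul _) hsm hcompare
    _ ≤ c ^ p * (1 - -1) := by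
        rw [integral_const_mul]
        gcongr
        exact setIntegral_abs_deriv_le_of_mapsTo_Icc (by norm_num) hsm hderiv hinj_h hmaps
    _ = 2 * c ^ p := by ring

theorem setIntegral_dampedSineOscillation_Ioc_zero_le (hp : 2 ≤ p) (hA : 0 < A) (hr : 0 < r)
    {δ : ℝ} (hδ : 0 ≤ δ) (hδr : δ ≤ 1 / r) :
    ∫ u in Ioc 0 δ ∩ dampedSineStrip p A r, dampedSineOscillation p A r u ≤ A * r := by
  have hbound : ∀ u ∈ Ioc 0 δ ∩ dampedSineStrip p A r,
      ‖dampedSineOscillation p A r u‖ ≤ A * r ^ 2 := by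
    rintro u ⟨⟨hu0, huδ⟩, -⟩
    rw [norm_of_nonneg (dampedSineOscillation_nonneg hA hr hu0.le)]
    simpa [hr.ne'] using dampedSineOscillation_le hp hA hr ⟨hu0, huδ.trans hδr⟩
  have hvol : volume.real (Ioc 0 δ ∩ dampedSineStrip p A r) ≤ 1 / r :=
    (measureReal_mono inter_subset_left measure_Ioc_lt_top.ne).trans (by simpa [hδ] using hδr)
  calc ∫ u in Ioc 0 δ ∩ dampedSineStrip p A r, dampedSineOscillation p A r u
      ≤ A * r ^ 2 * volume.real (Ioc 0 δ ∩ dampedSineStrip p A r) :=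
        (le_norm_self _).trans (norm_setIntegral_le_of_norm_le_const
          ((measure_mono inter_subset_left).trans_lt measure_Ioc_lt_top) hbound)
    _ ≤ A * r ^ 2 * (1 / r) := by gcongr
    _ = A * r := by field_simp

theorem setIntegral_dampedSineOscillation_Ioc_cosineNode_le (hp : 2 ≤ p) (hA : 0 < A) (hr : 0 < r)
    (N : ℕ) :
    ∫ u in Ioc (cosineNode A N) (cosineNode A 0) ∩ dampedSineStrip p A r,
      dampedSineOscillation p A r u ≤ N * (2 * 3 ^ p) := by
  rw [← intervalIntegral_restrict_eq_setIntegral_inter (antitone_cosineNode hA N.zero_le)]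
  refine intervalIntegral_le_mul_of_forall_le
    (fun _ => Integrable.intervalIntegrable (integrableOn_dampedSineOscillation hp hA hr))
    (fun k => ?_) N
  rw [intervalIntegral_restrict_eq_setIntegral_inter (antitone_cosineNode hA k.le_succ)]
  exact setIntegral_dampedSineOscillation_le_of_injOn hp hA hr (cosineNode_pos hA _)
    zero_le_three (cosineNode_le_three_mul_succ hA k) (injOn_sin_const_div hA k)

theorem setIntegral_dampedSineOscillation_le (hp : 2 ≤ p) (hA : π / 2 ≤ A) (hr : 1 ≤ r) :
    ∫ u in dampedSineStrip p A r, dampedSineOscillation p A r u ≤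
      (1 + 4 * 3 ^ p) * (A * r) := by
  have hA0 : 0 < A := pi_div_two_pos.trans_le hA
  have hr0 : 0 < r := by positivity
  set N := ⌈A * r / π⌉₊
  have hN : (N : ℝ) ≤ 2 * (A * r) := by
    have hhalf : 2⁻¹ ≤ A * r / π := by
      rw [le_div_iff₀ pi_pos]
      nlinarith
    exact (Nat.ceil_le_two_mul hhalf).trans
      (mul_le_mul_of_nonneg_left (div_le_self (by positivity) (by linarith [pi_gt_three]))
        zero_le_two)
  have hnode : cosineNode A N ≤ 1 / r :=
    cosineNode_le_one_div hr0 ((div_le_iff₀ pi_pos).1 (Nat.le_ceil _))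
  have hnode_le := antitone_cosineNode hA0 N.zero_le
  have hsplit : dampedSineStrip p A r =
      Ioc 0 (cosineNode A N) ∩ dampedSineStrip p A r ∪
        Ioc (cosineNode A N) (cosineNode A 0) ∩ dampedSineStrip p A r := by
    rw [← union_inter_distrib_right, Ioc_union_Ioc_eq_Ioc (cosineNode_pos hA0 N).le hnode_le,
      inter_eq_right.2 (dampedSineStrip_subset.trans
        (Ioc_subset_Ioc_right (one_le_cosineNode_zero hA)))]
  have hint := integrableOn_dampedSineOscillation hp hA0 hr0
  calc ∫ u in dampedSineStrip p A r, dampedSineOscillation p A r u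
      = (∫ u in Ioc 0 (cosineNode A N) ∩ dampedSineStrip p A r, dampedSineOscillation p A r u)
        + ∫ u in Ioc (cosineNode A N) (cosineNode A 0) ∩ dampedSineStrip p A r,
          dampedSineOscillation p A r u := by
        rw [← setIntegral_union ((Ioc_disjoint_Ioc_of_le le_rfl).mono inter_subset_left
          inter_subset_left) (measurableSet_Ioc.inter measurableSet_dampedSineStrip)
          (hint.mono_set inter_subset_right) (hint.mono_set inter_subset_right), ← hsplit]
    _ ≤ A * r + 2 * (A * r) * (2 * 3 ^ p) := by
        refine add_le_add (setIntegral_dampedSineOscillation_Ioc_zero_le hp hA0 hr0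
          (cosineNode_pos hA0 N).le hnode)
          ((setIntegral_dampedSineOscillation_Ioc_cosineNode_le hp hA0 hr0 N).trans ?_)
        gcongr
    _ = (1 + 4 * 3 ^ p) * (A * r) := by ring

theorem dampedSineLength_le (hp : 2 ≤ p) (hA : π / 2 ≤ A) (hr : 1 ≤ r) :
    dampedSineLength p A r ≤ (p + 2 + 4 * 3 ^ p) * (A * r) := by
  have hA0 : 0 < A := lt_of_lt_of_le (by positivity) hA
  have hr0 : 0 < r := by positivity
  have hconst := integrableOn_const_dampedSineStrip (p := p) (A := A) (r := r) (1 + p * r)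
  have hosc := integrableOn_dampedSineOscillation hp hA0 hr0
  have hvol : volume.real (dampedSineStrip p A r) ≤ 1 := by
    simpa using measureReal_mono (μ := volume) (dampedSineStrip_subset (p := p) (A := A) (r := r))
      measure_Ioc_lt_top.ne
  calc dampedSineLength p A r
      ≤ ∫ u in dampedSineStrip p A r, (1 + p * r + dampedSineOscillation p A r u) :=
        setIntegral_mono_on (integrableOn_sqrt_one_add_deriv_dampedSine_sq hp hA0 hr0)
          (hconst.add hosc) measurableSet_dampedSineStrip fun u hu =>
            sqrt_one_add_deriv_dampedSine_sq_le (by omega) hA0 hr0 hu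
    _ = volume.real (dampedSineStrip p A r) * (1 + p * r)
        + ∫ u in dampedSineStrip p A r, dampedSineOscillation p A r u := by
        rw [integral_add hconst hosc, setIntegral_const, smul_eq_mul]
    _ ≤ 1 * (A * r + p * (A * r)) + (1 + 4 * 3 ^ p) * (A * r) := by
        have hA1 : 1 ≤ A := by linarith [pi_gt_three]
        gcongr
        · exact one_le_mul_of_one_le_of_one_le hA1 hr
        · exact le_mul_of_one_le_left hr0.le hA1
        · exact setIntegral_dampedSineOscillation_le hp hA hr
    _ = (p + 2 + 4 * 3 ^ p) * (A * r) := by ring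

theorem le_sqrt_one_add_deriv_dampedSine_sq (hp : p ≠ 0) (hA : 0 < A) (hr : 1 ≤ r)
    (hu : u ∈ Ioc (1 / (2 * r)) (1 / r)) :
    (1 / 2) ^ p * (A / u ^ 2 * cos (A / u) ^ 2) - p * r ≤
      √(1 + deriv (dampedSine p A r) u ^ 2) := by
  have hr0 : 0 < r := by positivity
  have hu0 : 0 < u := lt_trans (by positivity) hu.1
  have hru : 1 / 2 ≤ r * u := by
    have hlt := hu.1
    rw [div_lt_iff₀ (by positivity)] at hlt
    linarith
  have hosc : (1 / 2) ^ p * (A / u ^ 2 * cos (A / u) ^ 2) ≤ dampedSineOscillation p A r u := by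
    rw [dampedSineOscillation, ← mul_assoc, ← sq_abs (cos (A / u))]
    gcongr
    exact pow_le_of_le_one (abs_nonneg _) (abs_cos_le_one _) two_ne_zero
  have hderiv := (abs_le.1 (abs_abs_deriv_dampedSine_sub_le hp hA hr0
    (Ioc_subset_dampedSineStrip hr ⟨hu0, hu.2⟩))).1
  have hsqrt : |deriv (dampedSine p A r) u| ≤ √(1 + deriv (dampedSine p A r) u ^ 2) :=
    abs_le_sqrt (by linarith)
  linarith

theorem le_dampedSineLength (hp : 2 ≤ p) (hA : 0 < A) (hr : 1 ≤ r) :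
    (1 / 2) ^ p * ((A * r - 1) / 2) - p / 2 ≤ dampedSineLength p A r := by
  have hr0 : 0 < r := by positivity
  have hα : 0 < 1 / (2 * r) := by positivity
  have hαβ : 1 / (2 * r) ≤ 1 / r := by
    gcongr
    linarith
  have hsub : Ioc (1 / (2 * r)) (1 / r) ⊆ dampedSineStrip p A r :=
    (Ioc_subset_Ioc_left hα.le).trans (Ioc_subset_dampedSineStrip hr)
  have hcos : IntervalIntegrable (fun u => (1 / 2) ^ p * (A / u ^ 2 * cos (A / u) ^ 2)) volume
      (1 / (2 * r)) (1 / r) := by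
    refine ContinuousOn.intervalIntegrable_of_Icc hαβ fun u hu => ?_
    have hu0 : u ≠ 0 := (hα.trans_le hu.1).ne'
    have hu2 : u ^ 2 ≠ 0 := pow_ne_zero 2 hu0
    exact ContinuousAt.continuousWithinAt (by fun_prop (disch := assumption))
  have hlen := integrableOn_sqrt_one_add_deriv_dampedSine_sq hp hA hr0
  calc (1 / 2) ^ p * ((A * r - 1) / 2) - p / 2
      ≤ (1 / 2) ^ p * (∫ x in A / (1 / r)..A / (1 / (2 * r)), cos x ^ 2)
        - p * r * (1 / r - 1 / (2 * r)) := by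
        have hhalf : p * r * (1 / r - 1 / (2 * r)) = p / 2 := by
          field_simp
          ring
        rw [hhalf]
        gcongr
        refine le_trans (le_of_eq ?_) (sub_one_div_two_le_integral_cos_sq _ _)
        field_simp
        ring
    _ = ∫ u in (1 / (2 * r))..(1 / r),
          ((1 / 2) ^ p * (A / u ^ 2 * cos (A / u) ^ 2) - p * r) := by
        rw [intervalIntegral.integral_sub hcos intervalIntegrable_const,
          intervalIntegral.integral_const_mul, intervalIntegral.integral_const, smul_eq_mul,
          integral_div_sq_mul_comp_const_div (φ := fun x => cos x ^ 2) (by fun_prop) hα hαβ,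
          mul_comm (p * r)]
    _ ≤ ∫ u in Ioc (1 / (2 * r)) (1 / r), √(1 + deriv (dampedSine p A r) u ^ 2) := by
        rw [intervalIntegral.integral_of_le hαβ]
        exact setIntegral_mono_on (hcos.sub intervalIntegrable_const).1 (hlen.mono_set hsub)
          measurableSet_Ioc fun u hu => le_sqrt_one_add_deriv_dampedSine_sq (by omega) hA hr hu
    _ ≤ dampedSineLength p A r :=
        setIntegral_mono_set hlen (ae_of_all _ fun _ => sqrt_nonneg _) hsub.eventuallyLE

theorem mul_le_dampedSineLength (hp : 2 ≤ p) (hA : 0 < A) (hr : 1 ≤ r)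
    (hAr : 2 + 2 * p * 2 ^ p ≤ A * r) : (1 / 2) ^ p / 4 * (A * r) ≤ dampedSineLength p A r := by
  have hscaled : (1 / 2) ^ p * 2 + 2 * p ≤ (1 / 2) ^ p * (A * r) := by
    calc (1 / 2 : ℝ) ^ p * 2 + 2 * p = (1 / 2) ^ p * (2 + 2 * p * 2 ^ p) := by
          rw [one_div, inv_pow]
          field_simp
      _ ≤ (1 / 2) ^ p * (A * r) := by gcongr
  linarith [le_dampedSineLength hp hA hr]

theorem setIntegral_arclength_eq_dampedSineLength {g : ℝ → ℝ}
    (hg : ∀ u, u ≠ 0 → g u = dampedSine p A r u) :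
    ∫ u in {u | u ∈ Icc (0 : ℝ) 1 ∧ |g u| ≤ 1}, √(1 + deriv g u ^ 2) =
      dampedSineLength p A r := by
  have hset : {u | u ∈ Icc (0 : ℝ) 1 ∧ |g u| ≤ 1} =ᵐ[volume] dampedSineStrip p A r := by
    filter_upwards [Measure.ae_ne volume 0] with u hu
    have hIcc : u ∈ Icc (0 : ℝ) 1 ↔ u ∈ Ioc (0 : ℝ) 1 :=
      and_congr_left fun _ => ⟨fun h => lt_of_le_of_ne h hu.symm, le_of_lt⟩
    refine propext ?_
    change (u ∈ Icc (0 : ℝ) 1 ∧ |g u| ≤ 1) ↔ (u ∈ Ioc (0 : ℝ) 1 ∧ |dampedSine p A r u| ≤ 1)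
    rw [hg u hu, hIcc]
  rw [setIntegral_congr_set hset]
  refine setIntegral_congr_fun measurableSet_dampedSineStrip fun u hu => ?_
  have hlocal : g =ᶠ[𝓝 u] dampedSine p A r :=
    (eventually_ne_nhds hu.1.1.ne').mono hg
  simp only [hlocal.deriv_eq]

end DampedSine

theorem repeller_volume_growth_case_small_general {a b : ℝ} {p : ℕ} (hp : 2 ≤ p) (ha : 1 < a)
    (hab : a ^ p ≤ b) {g : ℕ → ℝ → ℝ}
    (hg : ∀ (n : ℕ) (u : ℝ), u ≠ 0 → g n u = b ^ n * (a ^ (p * n))⁻¹ * u ^ p * sin (a ^ n / u))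
    {L : ℕ → ℝ}
    (hL : ∀ n, L n = ∫ u in {u | u ∈ Icc (0 : ℝ) 1 ∧ |g n u| ≤ 1}, √(1 + deriv (g n) u ^ 2)) :
    Tendsto (fun n : ℕ => 1 / (n : ℝ) * log (L n)) atTop (𝓝 (1 / p * log b)) := by
  have ha0 : 0 < a := zero_lt_one.trans ha
  obtain ⟨t, hat, rfl⟩ : ∃ t, a ≤ t ∧ t ^ p = b := by
    have hb : 0 ≤ b := (by positivity : 0 ≤ a ^ p).trans hab
    have hpow : (b ^ (p⁻¹ : ℝ)) ^ p = b := rpow_inv_natCast_pow hb (by omega)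
    exact ⟨_, le_of_pow_le_pow_left₀ (by omega) (by positivity) (hab.trans_eq hpow.symm), hpow⟩
  have hL' (n : ℕ) : L n = dampedSineLength p (a ^ n) ((t / a) ^ n) := by
    rw [hL n]
    refine setIntegral_arclength_eq_dampedSineLength fun u hu => ?_
    rw [hg n u hu, dampedSine]
    simp only [mul_pow, div_pow, ← pow_mul, mul_comm n p]
    ring
  have hAr (n : ℕ) : a ^ n * (t / a) ^ n = t ^ n := by
    rw [← mul_pow, mul_div_cancel₀ _ ha0.ne']
  have hr (n : ℕ) : 1 ≤ (t / a) ^ n := one_le_pow₀ ((one_le_div ha0).2 hat)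
  have hlog : 1 / p * log (t ^ p) = log t := by
    rw [log_pow]
    field_simp
  rw [hlog]
  refine tendsto_one_div_mul_log_of_pow_bounds (c := (1 / 2) ^ p / 4)
    (C := p + 2 + 4 * 3 ^ p) (ha0.trans_le hat) (by positivity) ?_ ?_
  · filter_upwards [(tendsto_pow_atTop_atTop_of_one_lt (ha.trans_le hat)).eventually_ge_atTop
      (2 + 2 * p * 2 ^ p)] with n hn
    rw [hL' n, ← hAr n]
    exact mul_le_dampedSineLength hp (pow_pos ha0 n) (hr n) (hn.trans_eq (hAr n).symm)
  · filter_upwards [(tendsto_pow_atTop_atTop_of_one_lt ha).eventually_ge_atTop (π / 2)] with n hn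
    rw [hL' n, ← hAr n]
    exact dampedSineLength_le hp hn (hr n)

/-- Case `1 < a ≤ 3^{1/5}` of the example: with
`gₙ(u) = 3ⁿ a^{-5n} u⁵ sin(aⁿ/u)` (and `gₙ(0) = 0`),
`Iₙ = {u ∈ [0,1] : |gₙ(u)| ≤ 1}` and
`Lₙ = ∫_{Iₙ} √(1 + gₙ'(u)²) du`, one has
`limsup (1/n) log Lₙ = (1/5) log 3`. -/
theorem repeller_volume_growth_case_small (a : ℝ)
    (ha1 : 1 < a) (ha2 : a ≤ (3 : ℝ) ^ ((1 : ℝ) / 5))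
    (g : ℕ → ℝ → ℝ)
    (hg : ∀ (n : ℕ) (u : ℝ), u ≠ 0 →
      g n u = 3 ^ n * (a ^ (5 * n))⁻¹ * u ^ 5 * Real.sin (a ^ n / u))
    (hg0 : ∀ n : ℕ, g n 0 = 0)
    (L : ℕ → ℝ)
    (hL : ∀ n : ℕ, L n =
      ∫ u in {u : ℝ | u ∈ Set.Icc (0 : ℝ) 1 ∧ |g n u| ≤ 1},
        Real.sqrt (1 + (deriv (g n) u) ^ 2)) :
    Filter.limsup (fun n : ℕ =>
        (((1 / (n : ℝ)) * Real.log (L n) : ℝ) : EReal)) Filter.atTop =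
      (((1 / 5) * Real.log 3 : ℝ) : EReal) := by
  have hab : a ^ 5 ≤ 3 := by
    rw [one_div, le_rpow_inv_iff_of_pos (by linarith) (by norm_num) (by norm_num)] at ha2
    exact_mod_cast ha2
  have hlim := repeller_volume_growth_case_small_general (p := 5) (by norm_num) ha1 hab hg hL
  exact ((continuous_coe_real_ereal.tendsto _).comp hlim).limsup_eq
end

section
/- Let A ≤ B be real numbers with 0 < A. Then the set S := {t ∈ [A,B] : tan t = t/5} is finite, and its cardinality satisfies #S ≤ (B − A)/π + 1. Moreover, for every integer k, the set S contains at most one point in the interval (kπ − π/2, kπ + π/2). -/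
/-! Each solution of `tan t = t / a` has the form `t = arctan (t / a) + k π`, where `k` is the
number of the branch of `tan` containing `t`; thus the solutions are the points at which
`t ↦ (t - arctan (t / a)) / π` takes an integer value. For `1 ≤ a` this function is strictly
increasing, because `arctan` strictly contracts distances, so a solution is determined by its
branch. As `arctan` is increasing, the function grows by at most `(B - A) / π` over `[A, B]`, and so
it takes at most `(B - A) / π + 1` integer values there. -/

open Real Set

section IntegerValues

variable {α R : Type*} [Ring R] [LinearOrder R] [IsStrictOrderedRing R] [FloorRing R] {f : α → R}

theorem injOn_floor_setOf_exists_eq_intCast (hf : Function.Injective f) :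
    InjOn (fun t ↦ ⌊f t⌋) {t | ∃ k : ℤ, f t = k} := by
  rintro s ⟨k, hk⟩ t ⟨l, hl⟩ hst
  have hkl : k = l := by simpa [hk, hl] using hst
  exact hf (by rw [hk, hl, hkl])

variable [LinearOrder α] {a b : α}

theorem mapsTo_floor_setOf_exists_eq_intCast (hf : Monotone f) :
    MapsTo (fun t ↦ ⌊f t⌋) {t | t ∈ Icc a b ∧ ∃ k : ℤ, f t = k} (Icc ⌈f a⌉ ⌊f b⌋) := by
  rintro t ⟨⟨hat, htb⟩, k, hk⟩
  exact ⟨Int.ceil_le.2 (by simpa [hk] using hf hat), Int.floor_mono (hf htb)⟩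

theorem finite_setOf_exists_eq_intCast (hf : StrictMono f) :
    {t | t ∈ Icc a b ∧ ∃ k : ℤ, f t = k}.Finite :=
  .of_injOn (mapsTo_floor_setOf_exists_eq_intCast hf.monotone)
    ((injOn_floor_setOf_exists_eq_intCast hf.injective).mono fun _ ht ↦ ht.2) (finite_Icc _ _)

theorem ncard_setOf_exists_eq_intCast_le (hf : StrictMono f) (hab : a ≤ b) :
    ({t | t ∈ Icc a b ∧ ∃ k : ℤ, f t = k}.ncard : R) ≤ f b - f a + 1 := by
  have hcard : {t | t ∈ Icc a b ∧ ∃ k : ℤ, f t = k}.ncard ≤ (⌊f b⌋ + 1 - ⌈f a⌉).toNat := by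
    rw [← Int.card_Icc, ← ncard_coe_finset, Finset.coe_Icc]
    exact ncard_le_ncard_of_injOn _ (mapsTo_floor_setOf_exists_eq_intCast hf.monotone)
      ((injOn_floor_setOf_exists_eq_intCast hf.injective).mono fun _ ht ↦ ht.2) (finite_Icc _ _)
  have hceil : ⌈f a⌉ ≤ ⌊f b⌋ + 1 :=
    (Int.ceil_mono (hf.monotone hab)).trans (Int.ceil_le_floor_add_one _)
  calc ({t | t ∈ Icc a b ∧ ∃ k : ℤ, f t = k}.ncard : R)
      ≤ ((⌊f b⌋ + 1 - ⌈f a⌉).toNat : R) := mod_cast hcard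
    _ = ⌊f b⌋ + 1 - ⌈f a⌉ := by
      rw [← Int.cast_natCast, Int.toNat_of_nonneg (sub_nonneg.2 hceil)]
      push_cast
      rfl
    _ ≤ f b + 1 - f a := by
      gcongr
      exacts [Int.floor_le _, Int.le_ceil _]
    _ = f b - f a + 1 := add_sub_right_comm _ _ _

end IntegerValues

theorem strictMono_sub_arctan : StrictMono fun x : ℝ ↦ x - arctan x := by
  refine strictMono_of_odd_strictMonoOn_nonneg (fun x ↦ by simp only [arctan_neg]; ring) ?_
  refine strictMonoOn_of_deriv_pos (convex_Ici 0) (by fun_prop) fun x hx ↦ ?_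
  have hx : 0 < x := by simpa using hx
  have hderiv : HasDerivAt (fun x ↦ x - arctan x) (1 - 1 / (1 + x ^ 2)) x :=
    (hasDerivAt_id x).sub (hasDerivAt_arctan x)
  rw [hderiv.deriv, sub_pos, div_lt_one (by positivity)]
  linarith [pow_pos hx 2]

theorem exists_eq_arctan_tan_add_int_mul_pi {t : ℝ} (ht : cos t ≠ 0) :
    ∃ k : ℤ, t = arctan (tan t) + k * π := by
  have hsin : sin (t - arctan (tan t)) = 0 := calc
    sin (t - arctan (tan t)) =
        cos t * cos (arctan (tan t)) * (tan t - tan (arctan (tan t))) := by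
      rw [sin_sub, ← tan_mul_cos (cos_arctan_pos (tan t)).ne']
      nth_rw 1 [← tan_mul_cos ht]
      ring
    _ = 0 := by rw [tan_arctan, sub_self, mul_zero]
  obtain ⟨k, hk⟩ := sin_eq_zero_iff.1 hsin
  exact ⟨k, by linarith⟩

theorem arctan_tan_of_mem_Ioo {t : ℝ} {k : ℤ} (ht : t ∈ Ioo (k * π - π / 2) (k * π + π / 2)) :
    arctan (tan t) = t - k * π := by
  rw [← tan_sub_int_mul_pi t k]
  exact arctan_tan (by linarith [ht.1]) (by linarith [ht.2])

/-- The real-valued branch number of `t` for the equation `tan t = t / a` with `a ≠ 0`: it is an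
integer `k` exactly when `t` solves the equation, and then `t` lies in the branch interval
`(k π - π / 2, k π + π / 2)`. -/
noncomputable def branchNumber (a t : ℝ) : ℝ := (t - arctan (t / a)) / π

section BranchNumber

variable {a s t : ℝ}

theorem branchNumber_eq_iff {x : ℝ} : branchNumber a t = x ↔ t = arctan (t / a) + x * π := by
  rw [branchNumber, div_eq_iff pi_ne_zero, sub_eq_iff_eq_add']

theorem cos_ne_zero_of_tan_eq_div (ha : a ≠ 0) (ht : tan t = t / a) : cos t ≠ 0 := by
  intro hcos
  -- `tan` takes the junk value `0` at a zero of `cos`, which leaves only `t = 0`.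
  have ht0 : t = 0 := by simpa [tan_eq_sin_div_cos, hcos, ha, eq_comm] using ht
  simp [ht0] at hcos

theorem tan_eq_div_iff_exists_branchNumber_eq_intCast (ha : a ≠ 0) :
    tan t = t / a ↔ ∃ k : ℤ, branchNumber a t = k := by
  simp only [branchNumber_eq_iff]
  constructor
  · intro ht
    rw [← ht]
    exact exists_eq_arctan_tan_add_int_mul_pi (cos_ne_zero_of_tan_eq_div ha ht)
  · rintro ⟨k, hk⟩
    rw [hk, tan_add_int_mul_pi, tan_arctan, ← hk]

theorem branchNumber_eq_intCast_of_mem_Ioo {k : ℤ} (ht : tan t = t / a)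
    (htk : t ∈ Ioo (k * π - π / 2) (k * π + π / 2)) : branchNumber a t = k := by
  rw [branchNumber_eq_iff, ← ht, arctan_tan_of_mem_Ioo htk, sub_add_cancel]

theorem strictMono_branchNumber (ha : 1 ≤ a) : StrictMono (branchNumber a) := by
  intro s t hst
  have ha0 : 0 < a := by linarith
  have harctan : arctan (t / a) - arctan (s / a) < t / a - s / a := by
    linarith [strictMono_sub_arctan (div_lt_div_of_pos_right hst ha0)]
  have hdiv : t / a - s / a ≤ t - s := by
    rw [← sub_div]
    exact div_le_self (sub_nonneg.2 hst.le) ha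
  exact div_lt_div_of_pos_right (by linarith) pi_pos

theorem branchNumber_sub_le (ha : 0 ≤ a) (hst : s ≤ t) :
    branchNumber a t - branchNumber a s ≤ (t - s) / π := by
  have harctan : arctan (s / a) ≤ arctan (t / a) := arctan_mono (by gcongr)
  rw [branchNumber, branchNumber, ← sub_div]
  exact div_le_div_of_nonneg_right (by linarith) pi_pos.le

end BranchNumber

theorem tan_eq_div_five_solutions_general {a A B : ℝ} (ha : 1 ≤ a) (hAB : A ≤ B) :
    {t : ℝ | t ∈ Icc A B ∧ tan t = t / a}.Finite ∧
    ({t : ℝ | t ∈ Icc A B ∧ tan t = t / a}.ncard : ℝ) ≤ (B - A) / π + 1 ∧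
    ∀ k : ℤ, ({t : ℝ | t ∈ Icc A B ∧ tan t = t / a} ∩
      Ioo (k * π - π / 2) (k * π + π / 2)).Subsingleton := by
  have ha0 : 0 < a := by linarith
  have hmono := strictMono_branchNumber ha
  refine ⟨?_, ?_, ?_⟩
  · simp only [tan_eq_div_iff_exists_branchNumber_eq_intCast ha0.ne']
    exact finite_setOf_exists_eq_intCast hmono
  · simp only [tan_eq_div_iff_exists_branchNumber_eq_intCast ha0.ne']
    linarith [ncard_setOf_exists_eq_intCast_le hmono hAB, branchNumber_sub_le ha0.le hAB]
  · rintro k s ⟨⟨-, hs⟩, hsk⟩ t ⟨⟨-, ht⟩, htk⟩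
    exact hmono.injective <| (branchNumber_eq_intCast_of_mem_Ioo hs hsk).trans
      (branchNumber_eq_intCast_of_mem_Ioo ht htk).symm

/-- Counting solutions of `tan t = t/5` in `[A, B]` with `0 < A ≤ B`: the solution set
is finite, has at most `(B - A)/π + 1` elements, and contains at most one point in each
branch interval `(kπ - π/2, kπ + π/2)`. -/
theorem tan_eq_div_five_solutions (A B : ℝ) (hA : 0 < A) (hAB : A ≤ B) :
    ({t : ℝ | t ∈ Set.Icc A B ∧ Real.tan t = t / 5}).Finite ∧
    (({t : ℝ | t ∈ Set.Icc A B ∧ Real.tan t = t / 5}).ncard : ℝ) ≤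
      (B - A) / Real.pi + 1 ∧
    ∀ k : ℤ,
      ({t : ℝ | t ∈ Set.Icc A B ∧ Real.tan t = t / 5} ∩
        Set.Ioo ((k : ℝ) * Real.pi - Real.pi / 2)
          ((k : ℝ) * Real.pi + Real.pi / 2)).Subsingleton :=
  tan_eq_div_five_solutions_general (by norm_num) hAB
end

section
/- Fix a real number a with 1 < a ≤ 3^{1/5} and n ∈ ℕ, and set uₙ := 3^{−n/5} aⁿ (so that 0 < uₙ ≤ 1). Then ∫_0^{uₙ} 3ⁿ a^{−4n} u³ |cos(aⁿ/u)| du ≥ 3^{n/5} / (2π (1 + 2π)⁴). -/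
/-!
Since `|cos| ≥ cos²`, on `(c, b]` the integrand `u ^ k * |cos (A / u)|` dominates
`c ^ (k + 2) * (cos (A / u) ^ 2 / u ^ 2)`, which has an elementary primitive, found by substituting
`v = A / u`. The oscillating part of that primitive contributes at least `-A⁻¹ / 2`, so the
resulting bound is positive once `c⁻¹` exceeds `b⁻¹ + A⁻¹`; we take `c⁻¹` to be twice that sum.
-/

open MeasureTheory Set

theorem integrableOn_pow_mul_abs_cos_div (k : ℕ) (A b : ℝ) :
    IntegrableOn (fun u : ℝ => u ^ k * |Real.cos (A / u)|) (Ioc 0 b) := by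
  have hpow : IntegrableOn (fun u : ℝ => u ^ k) (Ioc 0 b) :=
    (continuous_pow k).integrableOn_Ioc
  refine hpow.mul_bdd (c := 1) (Measurable.aestronglyMeasurable (by fun_prop))
    (.of_forall fun u => ?_)
  simpa only [Real.norm_eq_abs, abs_abs] using Real.abs_cos_le_one (A / u)

theorem hasDerivAt_primitive_cos_div_sq_div_sq {A u : ℝ} (hA : A ≠ 0) (hu : u ≠ 0) :
    HasDerivAt (fun u => -u⁻¹ / 2 - Real.sin (2 * A * u⁻¹) / (4 * A))
      (Real.cos (A / u) ^ 2 / u ^ 2) u := by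
  have hinv := hasDerivAt_inv hu
  refine ((hinv.neg.div_const 2).sub
    ((hinv.const_mul (2 * A)).sin.div_const (4 * A))).congr_deriv ?_
  rw [show 2 * A * u⁻¹ = 2 * (A / u) by ring, Real.cos_two_mul]
  field_simp
  ring

theorem intervalIntegrable_cos_div_sq_div_sq (A : ℝ) {c b : ℝ} (hc : 0 < c) (hcb : c ≤ b) :
    IntervalIntegrable (fun u => Real.cos (A / u) ^ 2 / u ^ 2) volume c b := by
  refine ContinuousOn.intervalIntegrable_of_Icc hcb fun u hu => ?_
  have hu0 : u ≠ 0 := (hc.trans_le hu.1).ne'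
  exact ContinuousAt.continuousWithinAt (by fun_prop (disch := positivity))

theorem le_integral_cos_div_sq_div_sq {A b c : ℝ} (hA : 0 < A) (hc : 0 < c) (hcb : c ≤ b) :
    (c⁻¹ - b⁻¹ - A⁻¹) / 2 ≤ ∫ u in c..b, Real.cos (A / u) ^ 2 / u ^ 2 := by
  have hne : ∀ u ∈ uIcc c b, u ≠ 0 := fun u hu => by
    rw [uIcc_of_le hcb] at hu
    exact (hc.trans_le hu.1).ne'
  rw [intervalIntegral.integral_eq_sub_of_hasDerivAt
    (fun u hu => hasDerivAt_primitive_cos_div_sq_div_sq hA.ne' (hne u hu))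
    (intervalIntegrable_cos_div_sq_div_sq A hc hcb)]
  have hsin : (Real.sin (2 * A * b⁻¹) - Real.sin (2 * A * c⁻¹)) / (4 * A) ≤ 2 / (4 * A) := by
    gcongr
    linarith [Real.sin_le_one (2 * A * b⁻¹), Real.neg_one_le_sin (2 * A * c⁻¹)]
  rw [sub_div, show 2 / (4 * A) = A⁻¹ / 2 by field_simp; norm_num] at hsin
  linarith

theorem pow_mul_cos_div_sq_div_sq_le (k : ℕ) (A : ℝ) {c u : ℝ} (hc : 0 < c) (hcu : c ≤ u) :
    c ^ (k + 2) * (Real.cos (A / u) ^ 2 / u ^ 2) ≤ u ^ k * |Real.cos (A / u)| := by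
  have hu : 0 < u := hc.trans_le hcu
  have hcos : Real.cos (A / u) ^ 2 ≤ |Real.cos (A / u)| := by
    rw [← sq_abs]
    exact pow_le_of_le_one (abs_nonneg _) (Real.abs_cos_le_one _) two_ne_zero
  calc c ^ (k + 2) * (Real.cos (A / u) ^ 2 / u ^ 2)
      ≤ u ^ (k + 2) * (|Real.cos (A / u)| / u ^ 2) := by gcongr
    _ = u ^ k * |Real.cos (A / u)| := by
        rw [pow_add]
        field_simp

theorem pow_mul_le_setIntegral_pow_mul_abs_cos_div (k : ℕ) {A b c : ℝ} (hA : 0 < A)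
    (hc : 0 < c) (hcb : c ≤ b) :
    c ^ (k + 2) * ((c⁻¹ - b⁻¹ - A⁻¹) / 2) ≤ ∫ u in Ioc 0 b, u ^ k * |Real.cos (A / u)| := by
  have hsub : Ioc c b ⊆ Ioc 0 b := Ioc_subset_Ioc_left hc.le
  have hint := integrableOn_pow_mul_abs_cos_div k A b
  calc c ^ (k + 2) * ((c⁻¹ - b⁻¹ - A⁻¹) / 2)
      ≤ c ^ (k + 2) * ∫ u in c..b, Real.cos (A / u) ^ 2 / u ^ 2 := by
        gcongr
        exact le_integral_cos_div_sq_div_sq hA hc hcb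
    _ = ∫ u in Ioc c b, c ^ (k + 2) * (Real.cos (A / u) ^ 2 / u ^ 2) := by
        rw [integral_const_mul, intervalIntegral.integral_of_le hcb]
    _ ≤ ∫ u in Ioc c b, u ^ k * |Real.cos (A / u)| :=
        setIntegral_mono_on ((intervalIntegrable_cos_div_sq_div_sq A hc hcb).1.const_mul _)
          (hint.mono_set hsub) measurableSet_Ioc
          fun u hu => pow_mul_cos_div_sq_div_sq_le k A hc hu.1.le
    _ ≤ ∫ u in Ioc 0 b, u ^ k * |Real.cos (A / u)| :=
        setIntegral_mono_set hint
          (ae_restrict_of_forall_mem measurableSet_Ioc fun u hu =>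
            mul_nonneg (pow_nonneg hu.1.le k) (abs_nonneg _))
          hsub.eventuallyLE

theorem le_setIntegral_pow_mul_abs_cos_div (k : ℕ) {A b : ℝ} (hA : 0 < A) (hb : 0 < b) :
    (A * b / (2 * (A + b))) ^ (k + 1) / 4 ≤ ∫ u in Ioc 0 b, u ^ k * |Real.cos (A / u)| := by
  set c := A * b / (2 * (A + b)) with hc_def
  have hc : 0 < c := by positivity
  have hinv : b⁻¹ + A⁻¹ = c⁻¹ / 2 := by
    rw [hc_def]
    field_simp
  have hcb : c ≤ b := by
    rw [hc_def, div_le_iff₀ (by positivity)]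
    nlinarith [mul_pos hA hb]
  calc c ^ (k + 1) / 4 = c ^ (k + 2) * ((c⁻¹ - b⁻¹ - A⁻¹) / 2) := by
        rw [sub_sub, hinv]
        field_simp
        ring
    _ ≤ _ := pow_mul_le_setIntegral_pow_mul_abs_cos_div k hA hc hcb

theorem le_setIntegral_pow_mul_abs_cos_div_of_le (k : ℕ) {A b : ℝ} (hb : 0 < b) (hbA : b ≤ A) :
    (b / 4) ^ (k + 1) / 4 ≤ ∫ u in Ioc 0 b, u ^ k * |Real.cos (A / u)| := by
  have hA : 0 < A := hb.trans_le hbA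
  have hquarter : b / 4 ≤ A * b / (2 * (A + b)) :=
    calc b / 4 = A * b / (2 * (A + A)) := by
          field_simp
          norm_num
      _ ≤ A * b / (2 * (A + b)) := by gcongr
  calc (b / 4) ^ (k + 1) / 4 ≤ (A * b / (2 * (A + b))) ^ (k + 1) / 4 := by gcongr
    _ ≤ _ := le_setIntegral_pow_mul_abs_cos_div k hA hb

theorem le_two_pi_mul_one_add_two_pi_pow_four :
    1024 ≤ 2 * Real.pi * (1 + 2 * Real.pi) ^ 4 :=
  calc (1024 : ℝ) ≤ 2 * 3 * (1 + 2 * 3) ^ 4 := by norm_num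
    _ ≤ _ := by gcongr <;> exact Real.pi_gt_three.le

theorem integral_lower_bound_small_case_general {a : ℝ} (ha : 0 < a) (n : ℕ) :
    (3 : ℝ) ^ ((n : ℝ) / 5) / (2 * Real.pi * (1 + 2 * Real.pi) ^ 4) ≤
      ∫ u in Ioc (0 : ℝ) ((3 : ℝ) ^ (-(n : ℝ) / 5) * a ^ n),
        3 ^ n * (a ^ (4 * n))⁻¹ * u ^ 3 * |Real.cos (a ^ n / u)| := by
  set q : ℝ := 3 ^ ((n : ℝ) / 5) with hq_def
  have hq : 1 ≤ q := Real.one_le_rpow (by norm_num) (by positivity)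
  have hq_pow : (3 : ℝ) ^ n = q ^ 5 := by
    rw [hq_def, ← Real.rpow_mul_natCast (by norm_num), ← Real.rpow_natCast]
    norm_num
  have hq_inv : (3 : ℝ) ^ (-(n : ℝ) / 5) = q⁻¹ := by
    rw [neg_div, Real.rpow_neg (by norm_num)]
  have hle : q⁻¹ * a ^ n ≤ a ^ n :=
    mul_le_of_le_one_left (by positivity) (inv_le_one_of_one_le₀ hq)
  simp_rw [hq_pow, hq_inv, mul_comm 4 n, pow_mul, mul_assoc (q ^ 5 * ((a ^ n) ^ 4)⁻¹)]
  rw [integral_const_mul]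
  calc q / (2 * Real.pi * (1 + 2 * Real.pi) ^ 4) ≤ q / 1024 := by
        gcongr
        exact le_two_pi_mul_one_add_two_pi_pow_four
    _ = q ^ 5 * ((a ^ n) ^ 4)⁻¹ * ((q⁻¹ * a ^ n / 4) ^ 4 / 4) := by
        field_simp
        norm_num
    _ ≤ _ := by
        gcongr
        exact le_setIntegral_pow_mul_abs_cos_div_of_le 3 (by positivity) hle

/-- Case `1 < a ≤ 3^{1/5}`, key lower bound: with `uₙ = 3^{-n/5} aⁿ`,
`∫_0^{uₙ} 3ⁿ a^{-4n} u³ |cos(aⁿ/u)| du ≥ 3^{n/5} / (2π (1 + 2π)⁴)`,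
the integral being the Lebesgue integral over `(0, uₙ]`. -/
theorem integral_lower_bound_small_case (a : ℝ) (ha1 : 1 < a)
    (ha2 : a ≤ (3 : ℝ) ^ ((1 : ℝ) / 5)) (n : ℕ) :
    (3 : ℝ) ^ ((n : ℝ) / 5) / (2 * Real.pi * (1 + 2 * Real.pi) ^ 4) ≤
      ∫ u in Set.Ioc (0 : ℝ) ((3 : ℝ) ^ (-(n : ℝ) / 5) * a ^ n),
        3 ^ n * (a ^ (4 * n))⁻¹ * u ^ 3 * |Real.cos (a ^ n / u)| :=
  integral_lower_bound_small_case_general (one_pos.trans ha1) n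
end
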